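/- arXiv:2505.01611 — 2 statements merged into one kernel-verified Lean document; each statement's English description precedes it below -/
import Mathlib

section
/- Let h₁, h₂ ∈ ℝ² be unit vectors and let w₁, w₂ be the widths of Ω parallel to h₁ and to h₂, respectively. Then for every u ∈ 𝒰_Ω one has ‖u_{h₁}‖₁ ≤ 2 (w₁ / w₂) ‖u_{h₂}‖₁. -/
open Set MeasureTheory
open scoped ENNReal

/-- Partial derivative of `u` in the `x` direction (junk value where `u` is not
differentiable). -/
noncomputable def ux (u : ℝ × ℝ → ℝ) (z : ℝ × ℝ) : ℝ := fderiv ℝ u z (1, 0)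

/-- Partial derivative of `u` in the `y` direction. -/
noncomputable def uy (u : ℝ × ℝ → ℝ) (z : ℝ × ℝ) : ℝ := fderiv ℝ u z (0, 1)

/-- Directional derivative of `u` in the direction `h`. -/
noncomputable def uh (h : ℝ × ℝ) (u : ℝ × ℝ → ℝ) (z : ℝ × ℝ) : ℝ := fderiv ℝ u z h

/-- The class `𝒰_Ω`: continuous concave functions on `Ω` vanishing on the boundary,
with uniformly bounded gradient over all interior points where it exists. -/
def MemU (Ω : Set (ℝ × ℝ)) (u : ℝ × ℝ → ℝ) : Prop :=
  ContinuousOn u Ω ∧ ConcaveOn ℝ Ω u ∧ (∀ z ∈ frontier Ω, u z = 0) ∧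
    ∃ C : ℝ, ∀ z ∈ interior Ω, ∀ g : (ℝ × ℝ) →L[ℝ] ℝ, HasFDerivAt u g z → ‖g‖ ≤ C

/-- The `L¹` norm of `f` over `Ω`. -/
noncomputable def L1N (Ω : Set (ℝ × ℝ)) (f : ℝ × ℝ → ℝ) : ℝ := ∫ z in Ω, |f z|

/-- The `L^p` norm of `f` over `Ω`, `p ∈ [1, ∞)`. -/
noncomputable def LpN (Ω : Set (ℝ × ℝ)) (p : ℝ) (f : ℝ × ℝ → ℝ) : ℝ :=
  (∫ z in Ω, |f z| ^ p) ^ (1 / p)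

/-- The `L^∞` norm (essential supremum) of `f` over `Ω`. -/
noncomputable def LinfN (Ω : Set (ℝ × ℝ)) (f : ℝ × ℝ → ℝ) : ℝ≥0∞ :=
  essSup (fun z => ENNReal.ofReal |f z|) (volume.restrict Ω)

/-- The width of `Ω` parallel to the (Euclidean unit) vector `h`: the distance between the
two lines of support of `Ω` parallel to `h`, i.e. the oscillation over `Ω` of the linear
functional given by the unit normal `(-h.2, h.1)` to `h`. -/
noncomputable def widthPar (Ω : Set (ℝ × ℝ)) (h : ℝ × ℝ) : ℝ :=
  sSup ((fun z : ℝ × ℝ => -h.2 * z.1 + h.1 * z.2) '' Ω) -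
    sInf ((fun z : ℝ × ℝ => -h.2 * z.1 + h.1 * z.2) '' Ω)

open Filter Topology


/-- The total variation of a monotone function dominates the integral of its derivative. -/
theorem MonotoneOn.lintegral_enorm_deriv_le {f : ℝ → ℝ} {a b : ℝ} (hab : a ≤ b)
    (hf : MonotoneOn f (Icc a b)) :
    ∫⁻ x in Ioo a b, ‖deriv f x‖ₑ ≤ ENNReal.ofReal (f b - f a) := by
  have hf' : MonotoneOn f (uIcc a b) := by rwa [uIcc_of_le hab]
  have hfab : f a ≤ f b := hf (left_mem_Icc.2 hab) (right_mem_Icc.2 hab) hab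
  have hmem := hf'.intervalIntegral_deriv_mem_uIcc
  rw [uIcc_of_le (sub_nonneg.2 hfab), intervalIntegral.integral_of_le hab,
    integral_Ioc_eq_integral_Ioo] at hmem
  have hint : IntegrableOn (deriv f) (Ioo a b) :=
    ((intervalIntegrable_iff_integrableOn_Ioo_of_le hab).1 hf'.intervalIntegrable_deriv)
  have hpos : ∀ x ∈ Ioo a b, 0 ≤ deriv f x := fun x hx => by
    rw [← derivWithin_of_mem_nhds (Icc_mem_nhds hx.1 hx.2)]
    exact hf.derivWithin_nonneg
  calc ∫⁻ x in Ioo a b, ‖deriv f x‖ₑ = ∫⁻ x in Ioo a b, ENNReal.ofReal (deriv f x) :=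
        setLIntegral_congr_fun measurableSet_Ioo fun x hx => Real.enorm_of_nonneg (hpos x hx)
    _ = ENNReal.ofReal (∫ x in Ioo a b, deriv f x) :=
        (ofReal_integral_eq_lintegral_ofReal hint
          ((ae_restrict_iff' measurableSet_Ioo).2 (ae_of_all _ hpos))).symm
    _ ≤ _ := ENNReal.ofReal_le_ofReal hmem.2

/-- A concave function is monotone to the left of a maximum point. -/
theorem ConcaveOn.monotoneOn_of_isMaxOn {f : ℝ → ℝ} {s : Set ℝ} {m : ℝ}
    (hf : ConcaveOn ℝ s f) (hm : m ∈ s) (hmax : IsMaxOn f s m) :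
    MonotoneOn f (s ∩ Iic m) := by
  intro x hx y hy hxy
  have h := hf.ge_on_segment hx.1 hm (z := y) (by
    rw [segment_eq_Icc hx.2]; exact ⟨hxy, hy.2⟩)
  rwa [min_eq_left (hmax hx.1)] at h

/-- A concave function is antitone to the right of a maximum point. -/
theorem ConcaveOn.antitoneOn_of_isMaxOn {f : ℝ → ℝ} {s : Set ℝ} {m : ℝ}
    (hf : ConcaveOn ℝ s f) (hm : m ∈ s) (hmax : IsMaxOn f s m) :
    AntitoneOn f (s ∩ Ici m) := by
  intro x hx y hy hxy
  have h := hf.ge_on_segment hm hy.1 (z := x) (by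
    rw [segment_eq_Icc hy.2]; exact ⟨hx.2, hxy⟩)
  rwa [min_eq_right (hmax hy.1)] at h

theorem ConcaveOn.lintegral_enorm_deriv_le {f : ℝ → ℝ} {a b M : ℝ} (hab : a ≤ b)
    (hf : ConcaveOn ℝ (Icc a b) f) (hc : ContinuousOn f (Icc a b)) (ha : f a = 0) (hb : f b = 0)
    (hM : ∀ x ∈ Icc a b, f x ≤ M) :
    ∫⁻ x in Ioo a b, ‖deriv f x‖ₑ ≤ ENNReal.ofReal (2 * M) := by
  obtain ⟨m, hm, hmax⟩ := isCompact_Icc.exists_isMaxOn (nonempty_Icc.2 hab) hc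
  have hM0 : 0 ≤ M := ha ▸ hM a (left_mem_Icc.2 hab)
  have hleft := MonotoneOn.lintegral_enorm_deriv_le hm.1
    ((hf.monotoneOn_of_isMaxOn hm hmax).mono fun x hx => ⟨⟨hx.1, hx.2.trans hm.2⟩, hx.2⟩)
  have hright := MonotoneOn.lintegral_enorm_deriv_le hm.2
    ((hf.antitoneOn_of_isMaxOn hm hmax).neg.mono fun x hx => ⟨⟨hm.1.trans hx.1, hx.2⟩, hx.1⟩)
  simp only [deriv.fun_neg, enorm_neg, ha, hb, neg_zero, sub_zero, zero_sub,
    neg_neg] at hleft hright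
  rw [setLIntegral_congr Ioo_ae_eq_Ioc] at hleft hright ⊢
  rw [← Ioc_union_Ioc_eq_Ioc hm.1 hm.2]
  refine (lintegral_union_le _ _ _).trans ((add_le_add hleft hright).trans ?_)
  have h0 : 0 ≤ f m := ha ▸ hmax (left_mem_Icc.2 hab)
  rw [← ENNReal.ofReal_add h0 h0]
  exact ENNReal.ofReal_le_ofReal (by linarith [hM m hm])

theorem LocallyLipschitzOn.ofReal_abs_sub_le_lintegral {f : ℝ → ℝ} {a b : ℝ} (hab : a < b)
    (hf : LocallyLipschitzOn (Ioo a b) f) (hc : ContinuousOn f (Icc a b)) :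
    ENNReal.ofReal |f b - f a| ≤ ∫⁻ x in Ioo a b, ‖deriv f x‖ₑ := by
  have key : ∀ c d, a < c → c ≤ d → d < b →
      ENNReal.ofReal |f d - f c| ≤ ∫⁻ x in Ioo a b, ‖deriv f x‖ₑ := by
    intro c d hac hcd hdb
    have hsub : Icc c d ⊆ Ioo a b := Icc_subset_Ioo hac hdb
    obtain ⟨K, hK⟩ := (hf.mono hsub).exists_lipschitzOnWith_of_compact isCompact_Icc
    rw [← uIcc_of_le hcd] at hK
    rw [← hK.absolutelyContinuousOnInterval.integral_deriv_eq_sub,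
      intervalIntegral.integral_of_le hcd, ← Real.norm_eq_abs, ofReal_norm]
    exact (enorm_integral_le_lintegral_enorm _).trans
      (lintegral_mono_set (Ioc_subset_Icc_self.trans hsub))
  have hev : ∀ᶠ ε : ℝ in 𝓝[>] 0, 0 < ε ∧ ε < (b - a) / 2 :=
    (eventually_mem_nhdsWithin).and (nhdsWithin_le_nhds (Iio_mem_nhds (by linarith)))
  have hta : Tendsto (fun ε => f (a + ε)) (𝓝[>] 0) (𝓝 (f a)) := by
    refine (hc a (left_mem_Icc.2 hab.le)).tendsto.comp (tendsto_nhdsWithin_iff.2 ⟨?_, ?_⟩)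
    · exact (Continuous.tendsto' (by fun_prop) _ _ (by simp)).mono_left nhdsWithin_le_nhds
    · filter_upwards [hev] with ε hε
      exact ⟨by linarith, by linarith⟩
  have htb : Tendsto (fun ε => f (b - ε)) (𝓝[>] 0) (𝓝 (f b)) := by
    refine (hc b (right_mem_Icc.2 hab.le)).tendsto.comp (tendsto_nhdsWithin_iff.2 ⟨?_, ?_⟩)
    · exact (Continuous.tendsto' (by fun_prop) _ _ (by simp)).mono_left nhdsWithin_le_nhds
    · filter_upwards [hev] with ε hε
      exact ⟨by linarith, by linarith⟩
  refine le_of_tendsto ((ENNReal.continuous_ofReal.tendsto _).comp (htb.sub hta).abs) ?_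
  filter_upwards [hev] with ε hε
  exact key _ _ (by linarith) (by linarith) (by linarith)

theorem ConcaveOn.ofReal_le_lintegral_enorm_deriv {f : ℝ → ℝ} {a b s : ℝ} (hs : s ∈ Ioo a b)
    (hf : ConcaveOn ℝ (Icc a b) f) (hc : ContinuousOn f (Icc a b)) (ha : f a = 0) (hb : f b = 0) :
    ENNReal.ofReal (2 * f s) ≤ ∫⁻ x in Ioo a b, ‖deriv f x‖ₑ := by
  have hloc : LocallyLipschitzOn (Ioo a b) f :=
    (hf.subset Ioo_subset_Icc_self (convex_Ioo a b)).locallyLipschitzOn isOpen_Ioo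
  have hleft := (hloc.mono (Ioo_subset_Ioo_right hs.2.le)).ofReal_abs_sub_le_lintegral hs.1
    (hc.mono (Icc_subset_Icc_right hs.2.le))
  have hright := (hloc.mono (Ioo_subset_Ioo_left hs.1.le)).ofReal_abs_sub_le_lintegral hs.2
    (hc.mono (Icc_subset_Icc_left hs.1.le))
  rw [ha, sub_zero] at hleft
  rw [hb, zero_sub, abs_neg] at hright
  calc ENNReal.ofReal (2 * f s) ≤ ENNReal.ofReal |f s| + ENNReal.ofReal |f s| := by
        rw [← ENNReal.ofReal_add (abs_nonneg _) (abs_nonneg _)]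
        exact ENNReal.ofReal_le_ofReal (by linarith [le_abs_self (f s)])
    _ ≤ _ := add_le_add hleft hright
    _ = ∫⁻ x in Ioo a s ∪ Ioo s b, ‖deriv f x‖ₑ :=
        (lintegral_union measurableSet_Ioo
          (Set.disjoint_left.2 fun x hx hx' => lt_asymm hx.2 hx'.1)).symm
    _ ≤ _ := lintegral_mono_set
        (union_subset (Ioo_subset_Ioo_right hs.2.le) (Ioo_subset_Ioo_left hs.1.le))

section Line

variable {E : Type*} [NormedAddCommGroup E] [NormedSpace ℝ E] {Ω : Set E} {u : E → ℝ} {c h : E}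

theorem line_combination_eq {α β x y : ℝ} (hαβ : α + β = 1) :
    c + (α • x + β • y) • h = α • (c + x • h) + β • (c + y • h) := by
  simp only [smul_add, smul_smul, add_smul, smul_eq_mul]
  nth_rewrite 1 [← one_smul ℝ c]
  rw [← hαβ, add_smul]
  abel

/-- A line through an interior point of a compact convex set meets the interior in an open segment
whose endpoints lie on the frontier. -/
theorem Convex.exists_preimage_interior_eq_Ioo (hΩc : IsCompact Ω) (hΩ : Convex ℝ Ω)
    (hh : h ≠ 0) {s₀ : ℝ} (hs₀ : c + s₀ • h ∈ interior Ω) :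
    ∃ a b, s₀ ∈ Ioo a b ∧ (fun s : ℝ => c + s • h) ⁻¹' interior Ω = Ioo a b ∧
      (∀ s ∈ Icc a b, c + s • h ∈ Ω) ∧ c + a • h ∈ frontier Ω ∧ c + b • h ∈ frontier Ω := by
  set l : ℝ → E := fun s => c + s • h with hl
  have hlc : Continuous l := by fun_prop
  set S := l ⁻¹' interior Ω with hS
  have hSo : IsOpen S := isOpen_interior.preimage hlc
  have hSne : S.Nonempty := ⟨s₀, hs₀⟩
  have hSconv : Convex ℝ S := by
    intro x hx y hy α β hα hβ hαβ
    simp only [hS, mem_preimage, hl, line_combination_eq hαβ]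
    exact hΩ.interior hx hy hα hβ hαβ
  have hSconn : IsConnected S := ⟨hSne, hSconv.isPreconnected⟩
  obtain ⟨R, hR⟩ := hΩc.isBounded.exists_norm_le
  have hbound : ∀ s ∈ S, |s| ≤ (R + ‖c‖) / ‖h‖ := by
    intro s hs
    rw [le_div_iff₀ (norm_pos_iff.2 hh), ← Real.norm_eq_abs, ← norm_smul]
    have h1 : s • h = l s - c := by simp [hl]
    rw [h1]
    exact (norm_sub_le _ _).trans (by gcongr; exact hR _ (interior_subset hs))
  have hbelow : BddBelow S := ⟨_, fun s hs => (abs_le.1 (hbound s hs)).1⟩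
  have habove : BddAbove S := ⟨_, fun s hs => (abs_le.1 (hbound s hs)).2⟩
  have ha : sInf S ∉ S := fun hmem => by
    obtain ⟨ε, hε, hsub⟩ := Metric.isOpen_iff.1 hSo _ hmem
    have := csInf_le hbelow (hsub (show sInf S - ε / 2 ∈ Metric.ball (sInf S) ε by
      rw [Metric.mem_ball, Real.dist_eq, abs_lt]; constructor <;> linarith))
    linarith
  have hb : sSup S ∉ S := fun hmem => by
    obtain ⟨ε, hε, hsub⟩ := Metric.isOpen_iff.1 hSo _ hmem
    have := le_csSup habove (hsub (show sSup S + ε / 2 ∈ Metric.ball (sSup S) ε by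
      rw [Metric.mem_ball, Real.dist_eq, abs_lt]; constructor <;> linarith))
    linarith
  have hSeq : S = Ioo (sInf S) (sSup S) := by
    refine Subset.antisymm (fun s hs => ⟨?_, ?_⟩) (hSconn.Ioo_csInf_csSup_subset hbelow habove)
    · exact lt_of_le_of_ne (csInf_le hbelow hs) fun e => ha (e ▸ hs)
    · exact lt_of_le_of_ne (le_csSup habove hs) fun e => hb (e ▸ hs)
  have hs₀' : s₀ ∈ Ioo (sInf S) (sSup S) := hSeq ▸ hs₀
  have hclosure : ∀ s ∈ Icc (sInf S) (sSup S), l s ∈ Ω := by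
    intro s hs
    rw [← closure_Ioo (hs₀'.1.trans hs₀'.2).ne, ← hSeq] at hs
    exact closure_minimal (preimage_mono interior_subset) (hΩc.isClosed.preimage hlc) hs
  have hle : sInf S ≤ sSup S := (hs₀'.1.trans hs₀'.2).le
  refine ⟨sInf S, sSup S, hs₀', hSeq, hclosure, ?_, ?_⟩
  · rw [hΩc.isClosed.frontier_eq]
    exact ⟨hclosure _ (left_mem_Icc.2 hle), ha⟩
  · rw [hΩc.isClosed.frontier_eq]
    exact ⟨hclosure _ (right_mem_Icc.2 hle), hb⟩

theorem ConcaveOn.comp_line {s : Set ℝ} (hu : ConcaveOn ℝ Ω u) (hs : Convex ℝ s)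
    (hmaps : ∀ x ∈ s, c + x • h ∈ Ω) : ConcaveOn ℝ s fun x => u (c + x • h) := by
  refine ⟨hs, fun x hx y hy α β hα hβ hαβ => ?_⟩
  simp only [line_combination_eq hαβ]
  exact hu.2 (hmaps x hx) (hmaps y hy) hα hβ hαβ

theorem ConcaveOn.nonneg_of_frontier_eq_zero [Nontrivial E] (hΩc : IsCompact Ω)
    (hu : ConcaveOn ℝ Ω u) (h0 : ∀ z ∈ frontier Ω, u z = 0) {z : E} (hz : z ∈ Ω) : 0 ≤ u z := by
  by_cases hzi : z ∈ interior Ω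
  · obtain ⟨e, he⟩ := exists_ne (0 : E)
    obtain ⟨a, b, hs, -, hmaps, ha, hb⟩ := hu.1.exists_preimage_interior_eq_Ioo hΩc he
      (c := z) (s₀ := 0) (by simpa using hzi)
    have hab := (hs.1.trans hs.2).le
    have := (hu.comp_line (convex_Icc a b) hmaps).ge_on_segment (left_mem_Icc.2 hab)
      (right_mem_Icc.2 hab) (z := 0) (by rw [segment_eq_Icc hab]; exact ⟨hs.1.le, hs.2.le⟩)
    simpa [h0 _ ha, h0 _ hb] using this
  · exact (h0 z (by rw [hΩc.isClosed.frontier_eq]; exact ⟨hz, hzi⟩)).ge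

theorem DifferentiableAt.deriv_comp_line {s : ℝ} (hu : DifferentiableAt ℝ u (c + s • h)) :
    deriv (fun x : ℝ => u (c + x • h)) s = fderiv ℝ u (c + s • h) h := by
  have hl : HasDerivAt (fun x : ℝ => c + x • h) h s := by
    simpa using ((hasDerivAt_id s).smul_const h).const_add c
  exact (hu.hasFDerivAt.comp_hasDerivAt s hl).deriv

theorem ConcaveOn.lintegral_enorm_fderiv_line_le (hΩc : IsCompact Ω) (hh : h ≠ 0)
    (huc : ContinuousOn u Ω) (hu : ConcaveOn ℝ Ω u) (h0 : ∀ z ∈ frontier Ω, u z = 0) {M : ℝ}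
    (hM : ∀ z ∈ Ω, u z ≤ M) :
    ∫⁻ s in (fun s : ℝ => c + s • h) ⁻¹' interior Ω, ‖fderiv ℝ u (c + s • h) h‖ₑ ≤
      ENNReal.ofReal (2 * M) := by
  rcases ((fun s : ℝ => c + s • h) ⁻¹' interior Ω).eq_empty_or_nonempty with hS | ⟨s₀, hs₀⟩
  · simp [hS]
  obtain ⟨a, b, hs, hS, hmaps, ha, hb⟩ := hu.1.exists_preimage_interior_eq_Ioo hΩc hh hs₀
  rw [hS]
  refine le_trans (lintegral_mono fun s => ?_)
    ((hu.comp_line (convex_Icc a b) hmaps).lintegral_enorm_deriv_le (hs.1.trans hs.2).le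
      (huc.comp (by fun_prop) hmaps) (h0 _ ha) (h0 _ hb) fun x hx => hM _ (hmaps x hx))
  by_cases hd : DifferentiableAt ℝ u (c + s • h)
  · rw [hd.deriv_comp_line]
  · simp [fderiv_zero_of_not_differentiableAt hd]

theorem ConcaveOn.ofReal_le_lintegral_enorm_fderiv_line (hΩc : IsCompact Ω) (hh : h ≠ 0)
    (huc : ContinuousOn u Ω) (hu : ConcaveOn ℝ Ω u) (h0 : ∀ z ∈ frontier Ω, u z = 0)
    (hd : ∀ᵐ s : ℝ, c + s • h ∈ interior Ω → DifferentiableAt ℝ u (c + s • h))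
    {s₀ : ℝ} (hs₀ : c + s₀ • h ∈ Ω) :
    ENNReal.ofReal (2 * u (c + s₀ • h)) ≤
      ∫⁻ s in (fun s : ℝ => c + s • h) ⁻¹' interior Ω, ‖fderiv ℝ u (c + s • h) h‖ₑ := by
  by_cases hi : c + s₀ • h ∈ interior Ω
  swap
  · rw [h0 _ (by rw [hΩc.isClosed.frontier_eq]; exact ⟨hs₀, hi⟩)]
    simp
  obtain ⟨a, b, hs, hS, hmaps, ha, hb⟩ := hu.1.exists_preimage_interior_eq_Ioo hΩc hh hi
  have hae : ∀ᵐ s ∂volume.restrict (Ioo a b),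
      ‖deriv (fun x : ℝ => u (c + x • h)) s‖ₑ = ‖fderiv ℝ u (c + s • h) h‖ₑ := by
    rw [ae_restrict_iff' measurableSet_Ioo]
    filter_upwards [hd] with s hds hsI
    rw [← hS] at hsI
    rw [(hds hsI).deriv_comp_line]
  rw [hS, ← lintegral_congr_ae hae]
  exact (hu.comp_line (convex_Icc a b) hmaps).ofReal_le_lintegral_enorm_deriv hs
    (huc.comp (by fun_prop) hmaps) (h0 _ ha) (h0 _ hb)

/-- Rademacher's theorem for locally Lipschitz functions on an open set. -/
theorem LocallyLipschitzOn.ae_differentiableAt [FiniteDimensional ℝ E] [MeasurableSpace E]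
    [BorelSpace E] (μ : Measure E) [μ.IsAddHaarMeasure] {U : Set E} (hU : IsOpen U)
    (hu : LocallyLipschitzOn U u) : ∀ᵐ z ∂μ, z ∈ U → DifferentiableAt ℝ u z := by
  have : ProperSpace E := FiniteDimensional.proper_real E
  refine measure_null_of_locally_null _ fun z hz => ?_
  simp only [mem_compl_iff, mem_ofPred_eq, Classical.not_imp] at hz
  obtain ⟨K, t, ht, hK⟩ := hu hz.1
  rw [hU.nhdsWithin_eq hz.1] at ht
  refine ⟨{x | x ∈ interior t ∧ ¬ DifferentiableAt ℝ u x}, ?_, ?_⟩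
  · filter_upwards [self_mem_nhdsWithin, nhdsWithin_le_nhds (interior_mem_nhds.2 ht)] with x hx hxt
    simp only [mem_compl_iff, mem_ofPred_eq, Classical.not_imp] at hx
    exact ⟨hxt, hx.2⟩
  · refine measure_mono_null ?_ (hK.ae_differentiableWithinAt_of_mem (μ := μ))
    rintro x ⟨hxt, hx⟩ hd
    exact hx ((hd (interior_subset hxt)).differentiableAt (mem_interior_iff_mem_nhds.1 hxt))

end Line

section Plane

variable {h : ℝ × ℝ}

theorem measurePreserving_normal_tangent (hh : h.1 ^ 2 + h.2 ^ 2 = 1) :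
    MeasurePreserving (fun x : ℝ × ℝ => x.1 • ((-h.2, h.1) : ℝ × ℝ) + x.2 • h) := by
  set L := Matrix.toLin (Module.Basis.finTwoProd ℝ) (Module.Basis.finTwoProd ℝ)
    !![-h.2, h.1; h.1, h.2] with hL
  have hdet : LinearMap.det L = -1 := by
    rw [hL, LinearMap.det_toLin, Matrix.det_fin_two_of]
    linarith
  have hfun : (fun x : ℝ × ℝ => x.1 • ((-h.2, h.1) : ℝ × ℝ) + x.2 • h) = L := by
    funext x
    rw [hL, Matrix.toLin_finTwoProd_apply]
    ext <;> simp <;> ring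
  refine ⟨by fun_prop, ?_⟩
  rw [hfun, Measure.map_linearMap_addHaar_eq_smul_addHaar _ (by rw [hdet]; norm_num), hdet]
  norm_num

theorem setLIntegral_eq_lintegral_lines (hh : h.1 ^ 2 + h.2 ^ 2 = 1) {F : ℝ × ℝ → ℝ≥0∞}
    (hF : Measurable F) {U : Set (ℝ × ℝ)} (hU : MeasurableSet U) :
    ∫⁻ z in U, F z = ∫⁻ t : ℝ,
      ∫⁻ s in (fun s : ℝ => t • ((-h.2, h.1) : ℝ × ℝ) + s • h) ⁻¹' U,
        F (t • ((-h.2, h.1) : ℝ × ℝ) + s • h) := by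
  have hmeas : Measurable (U.indicator F) := hF.indicator hU
  rw [← lintegral_indicator hU, ← (measurePreserving_normal_tangent hh).lintegral_comp hmeas,
    Measure.volume_eq_prod, lintegral_prod _ (by fun_prop)]
  refine lintegral_congr fun t => ?_
  rw [← lintegral_indicator (hU.preimage (by fun_prop))]
  rfl

theorem height_eq (hh : h.1 ^ 2 + h.2 ^ 2 = 1) (t s : ℝ) :
    -h.2 * (t • ((-h.2, h.1) : ℝ × ℝ) + s • h).1 + h.1 * (t • ((-h.2, h.1) : ℝ × ℝ) + s • h).2
      = t := by
  simp only [Prod.fst_add, Prod.snd_add, Prod.smul_fst, Prod.smul_snd, smul_eq_mul]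
  linear_combination t * hh

theorem eq_normal_add_tangent (hh : h.1 ^ 2 + h.2 ^ 2 = 1) (z : ℝ × ℝ) :
    z = (-h.2 * z.1 + h.1 * z.2) • ((-h.2, h.1) : ℝ × ℝ) + (h.1 * z.1 + h.2 * z.2) • h := by
  ext
  · simp only [Prod.fst_add, Prod.smul_fst, smul_eq_mul]
    linear_combination -z.1 * hh
  · simp only [Prod.snd_add, Prod.smul_snd, smul_eq_mul]
    linear_combination -z.2 * hh

theorem ne_zero_of_sq_add_sq_eq_one (hh : h.1 ^ 2 + h.2 ^ 2 = 1) : h ≠ 0 := by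
  rintro rfl
  simp at hh

variable {Ω : Set (ℝ × ℝ)}

theorem continuous_height (h : ℝ × ℝ) : Continuous fun z : ℝ × ℝ => -h.2 * z.1 + h.1 * z.2 := by
  fun_prop

theorem widthPar_pos (hΩc : IsCompact Ω) (hΩint : (interior Ω).Nonempty)
    (hh : h.1 ^ 2 + h.2 ^ 2 = 1) : 0 < widthPar Ω h := by
  obtain ⟨z, hz⟩ := hΩint
  have hline : Tendsto (fun ε : ℝ => z + ε • ((-h.2, h.1) : ℝ × ℝ)) (𝓝[>] 0) (𝓝 z) :=
    (Continuous.tendsto' (by fun_prop) _ _ (by simp)).mono_left nhdsWithin_le_nhds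
  obtain ⟨ε, hεΩ, hε⟩ := ((hline.eventually (mem_interior_iff_mem_nhds.1 hz)).and
    eventually_mem_nhdsWithin).exists
  have hK := hΩc.image (continuous_height h)
  have hinf := csInf_le hK.bddBelow (mem_image_of_mem _ (interior_subset hz))
  have hsup := le_csSup hK.bddAbove (mem_image_of_mem _ hεΩ)
  simp only [Prod.fst_add, Prod.snd_add, Prod.smul_fst, Prod.smul_snd, smul_eq_mul] at hsup
  have hε' : (0 : ℝ) < ε := hε
  have : ε * (h.1 ^ 2 + h.2 ^ 2) = ε := by rw [hh, mul_one]
  unfold widthPar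
  linarith

variable {u : ℝ × ℝ → ℝ}

/-- On each line parallel to `h` the integral of `|u_h|` is at most `2 M`. -/
theorem lintegral_enorm_fderiv_le (hΩc : IsCompact Ω) (huc : ContinuousOn u Ω)
    (hu : ConcaveOn ℝ Ω u) (h0 : ∀ z ∈ frontier Ω, u z = 0) (hh : h.1 ^ 2 + h.2 ^ 2 = 1)
    {M : ℝ} (hM0 : 0 ≤ M) (hM : ∀ z ∈ Ω, u z ≤ M) :
    ∫⁻ z in interior Ω, ‖fderiv ℝ u z h‖ₑ ≤ ENNReal.ofReal (2 * M * widthPar Ω h) := by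
  rw [setLIntegral_eq_lintegral_lines hh (measurable_fderiv_apply_const ℝ u h).enorm
    isOpen_interior.measurableSet]
  have hK := hΩc.image (continuous_height h)
  set A := sInf ((fun z : ℝ × ℝ => -h.2 * z.1 + h.1 * z.2) '' Ω)
  set B := sSup ((fun z : ℝ × ℝ => -h.2 * z.1 + h.1 * z.2) '' Ω)
  calc _ ≤ ∫⁻ t : ℝ, (Icc A B).indicator (fun _ => ENNReal.ofReal (2 * M)) t := by
        refine lintegral_mono fun t => ?_
        by_cases ht : t ∈ Icc A B
        · rw [indicator_of_mem ht]
          exact hu.lintegral_enorm_fderiv_line_le hΩc (ne_zero_of_sq_add_sq_eq_one hh) huc h0 hM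
        · have hempty : (fun s : ℝ => t • ((-h.2, h.1) : ℝ × ℝ) + s • h) ⁻¹' interior Ω = ∅ := by
            refine eq_empty_of_forall_notMem fun s hs => ht ?_
            have hmem := mem_image_of_mem (fun z : ℝ × ℝ => -h.2 * z.1 + h.1 * z.2)
              (interior_subset hs)
            simp only [height_eq hh] at hmem
            exact ⟨csInf_le hK.bddBelow hmem, le_csSup hK.bddAbove hmem⟩
          rw [hempty, Measure.restrict_empty, lintegral_zero_measure]
          exact zero_le
    _ = ENNReal.ofReal (2 * M * widthPar Ω h) := by
        rw [lintegral_indicator measurableSet_Icc, setLIntegral_const, Real.volume_Icc,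
          ← ENNReal.ofReal_mul (by positivity)]
        rfl

theorem ofReal_le_lintegral_ramp_right {J : ℝ → ℝ≥0∞} {A B M : ℝ} (hAB : A ≤ B) (hM : 0 ≤ M)
    (hJ : ∀ᵐ t : ℝ, ∀ θ ∈ Icc (0 : ℝ) 1, t = (1 - θ) * A + θ * B →
      ENNReal.ofReal (2 * (θ * M)) ≤ J t) :
    ENNReal.ofReal (M * (B - A)) ≤ ∫⁻ t in Ioo A B, J t := by
  rcases hAB.eq_or_lt with rfl | hlt
  · simp
  have hpos : 0 < B - A := sub_pos.2 hlt
  have hint : ∫ t in Ioo A B, 2 * ((t - A) / (B - A) * M) = M * (B - A) := by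
    rw [← integral_Ioc_eq_integral_Ioo, ← intervalIntegral.integral_of_le hAB,
      intervalIntegral.integral_const_mul, intervalIntegral.integral_mul_const,
      intervalIntegral.integral_div, intervalIntegral.integral_sub (by simp) (by simp)]
    simp only [integral_id, intervalIntegral.integral_const, smul_eq_mul]
    field_simp
    ring
  have hnonneg : ∀ t ∈ Ioo A B, 0 ≤ 2 * ((t - A) / (B - A) * M) := fun t ht => by
    have := sub_pos.2 ht.1
    positivity
  rw [← hint, ofReal_integral_eq_lintegral_ofReal
    (Continuous.integrableOn_Icc (by fun_prop) |>.mono_set Ioo_subset_Icc_self)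
    ((ae_restrict_iff' measurableSet_Ioo).2 (ae_of_all _ hnonneg))]
  refine lintegral_mono_ae ((ae_restrict_iff' measurableSet_Ioo).2 ?_)
  filter_upwards [hJ] with t ht htI
  refine ht _ ⟨div_nonneg (by linarith [htI.1]) hpos.le,
    (div_le_one hpos).2 (by linarith [htI.2])⟩ ?_
  field_simp
  ring

theorem ofReal_le_lintegral_ramp_left {J : ℝ → ℝ≥0∞} {A B M : ℝ} (hAB : A ≤ B) (hM : 0 ≤ M)
    (hJ : ∀ᵐ t : ℝ, ∀ θ ∈ Icc (0 : ℝ) 1, t = (1 - θ) * B + θ * A →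
      ENNReal.ofReal (2 * (θ * M)) ≤ J t) :
    ENNReal.ofReal (M * (B - A)) ≤ ∫⁻ t in Ioo A B, J t := by
  have hneg := (Measure.measurePreserving_neg (volume : Measure ℝ))
  have h := ofReal_le_lintegral_ramp_right (J := fun t => J (-t)) (neg_le_neg hAB) hM (by
    filter_upwards [hneg.quasiMeasurePreserving.ae hJ] with t ht θ hθ htθ
    exact ht θ hθ (by linarith))
  have hset := hneg.setLIntegral_comp_preimage_emb (MeasurableEquiv.neg ℝ).measurableEmbedding J
    (Ioo A B)
  rw [← hset]
  simpa [neg_add_eq_sub] using h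

/-- The integral of `|u_h|` over a line is at least twice the value of `u` at any of its points, and
by concavity these values dominate a tent function of height `u p` over the width of `Ω`. -/
theorem ofReal_le_lintegral_enorm_fderiv (hΩc : IsCompact Ω) (huc : ContinuousOn u Ω)
    (hu : ConcaveOn ℝ Ω u) (h0 : ∀ z ∈ frontier Ω, u z = 0) (hh : h.1 ^ 2 + h.2 ^ 2 = 1)
    {p : ℝ × ℝ} (hp : p ∈ Ω) :
    ENNReal.ofReal (u p * widthPar Ω h) ≤ ∫⁻ z in interior Ω, ‖fderiv ℝ u z h‖ₑ := by
  rw [setLIntegral_eq_lintegral_lines hh (measurable_fderiv_apply_const ℝ u h).enorm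
    isOpen_interior.measurableSet]
  set φ : ℝ × ℝ → ℝ := fun z => -h.2 * z.1 + h.1 * z.2 with hφ
  have hK : IsCompact (φ '' Ω) := hΩc.image (continuous_height h)
  set J : ℝ → ℝ≥0∞ := fun t =>
    ∫⁻ s in (fun s : ℝ => t • ((-h.2, h.1) : ℝ × ℝ) + s • h) ⁻¹' interior Ω,
      ‖fderiv ℝ u (t • ((-h.2, h.1) : ℝ × ℝ) + s • h) h‖ₑ
  have hdiff : ∀ᵐ z : ℝ × ℝ, z ∈ interior Ω → DifferentiableAt ℝ u z :=
    ((hu.subset interior_subset hu.1.interior).locallyLipschitzOn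
      isOpen_interior).ae_differentiableAt _ isOpen_interior
  have hlines := Measure.ae_ae_of_ae_prod
    ((measurePreserving_normal_tangent hh).quasiMeasurePreserving.ae hdiff)
  have hJ : ∀ᵐ t : ℝ, ∀ z ∈ Ω, φ z = t → ENNReal.ofReal (2 * u z) ≤ J t := by
    filter_upwards [hlines] with t ht z hz hzt
    have hz' := eq_normal_add_tangent hh z
    rw [show -h.2 * z.1 + h.1 * z.2 = t from hzt] at hz'
    rw [hz'] at hz
    have := hu.ofReal_le_lintegral_enorm_fderiv_line hΩc (ne_zero_of_sq_add_sq_eq_one hh) huc h0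
      ht hz
    rwa [← hz'] at this
  have hup : 0 ≤ u p := hu.nonneg_of_frontier_eq_zero hΩc h0 hp
  have hramp : ∀ q ∈ Ω, ∀ᵐ t : ℝ, ∀ θ ∈ Icc (0 : ℝ) 1, t = (1 - θ) * φ q + θ * φ p →
      ENNReal.ofReal (2 * (θ * u p)) ≤ J t := by
    intro q hq
    filter_upwards [hJ] with t ht θ hθ htθ
    have h1 : 0 ≤ 1 - θ := by linarith [hθ.2]
    have hconc := hu.2 hq hp h1 hθ.1 (by ring)
    have hq0 := mul_nonneg h1 (hu.nonneg_of_frontier_eq_zero hΩc h0 hq)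
    refine le_trans (ENNReal.ofReal_le_ofReal ?_)
      (ht ((1 - θ) • q + θ • p) (hu.1 hq hp h1 hθ.1 (by ring)) ?_)
    · simp only [smul_eq_mul] at hconc
      linarith
    · simp only [htθ, hφ, Prod.fst_add, Prod.snd_add, Prod.smul_fst, Prod.smul_snd, smul_eq_mul]
      ring
  obtain ⟨q₀, hq₀, hA⟩ := hΩc.exists_sInf_image_eq ⟨p, hp⟩ (continuous_height h).continuousOn
  obtain ⟨q₁, hq₁, hB⟩ := hΩc.exists_sSup_image_eq ⟨p, hp⟩ (continuous_height h).continuousOn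
  have hle₀ : φ q₀ ≤ φ p := hA.ge.trans (csInf_le hK.bddBelow (mem_image_of_mem φ hp))
  have hle₁ : φ p ≤ φ q₁ := (le_csSup hK.bddAbove (mem_image_of_mem φ hp)).trans hB.le
  have hw : widthPar Ω h = φ q₁ - φ q₀ := by rw [widthPar, hA, hB]
  calc ENNReal.ofReal (u p * widthPar Ω h)
      = ENNReal.ofReal (u p * (φ p - φ q₀)) + ENNReal.ofReal (u p * (φ q₁ - φ p)) := by
        rw [← ENNReal.ofReal_add (mul_nonneg hup (sub_nonneg.2 hle₀))
          (mul_nonneg hup (sub_nonneg.2 hle₁)), hw]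
        ring_nf
    _ ≤ (∫⁻ t in Ioo (φ q₀) (φ p), J t) + ∫⁻ t in Ioo (φ p) (φ q₁), J t :=
        add_le_add (ofReal_le_lintegral_ramp_right hle₀ hup (hramp q₀ hq₀))
          (ofReal_le_lintegral_ramp_left hle₁ hup (hramp q₁ hq₁))
    _ = ∫⁻ t in Ioo (φ q₀) (φ p) ∪ Ioo (φ p) (φ q₁), J t :=
        (lintegral_union measurableSet_Ioo
          (Set.disjoint_left.2 fun x hx hx' => lt_asymm hx.2 hx'.1)).symm
    _ ≤ ∫⁻ t, J t := setLIntegral_le_lintegral _ _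

theorem L1N_uh_eq_toReal (hΩconv : Convex ℝ Ω) (u : ℝ × ℝ → ℝ) (h : ℝ × ℝ) :
    L1N Ω (uh h u) = (∫⁻ z in interior Ω, ‖fderiv ℝ u z h‖ₑ).toReal := by
  have hae : interior Ω =ᵐ[volume] Ω :=
    interior_ae_eq_of_null_frontier (hΩconv.addHaar_frontier volume)
  rw [L1N, ← setIntegral_congr_set hae]
  exact integral_norm_eq_lintegral_enorm (measurable_fderiv_apply_const ℝ u h).aestronglyMeasurable

end Plane

/-- Corollary 1: for unit vectors `h₁, h₂` with widths `w₁, w₂` of `Ω`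
parallel to them, `‖u_{h₁}‖₁ ≤ 2 (w₁/w₂) ‖u_{h₂}‖₁` for every `u ∈ 𝒰_Ω`. -/
theorem stmt_7 (Ω : Set (ℝ × ℝ)) (hΩc : IsCompact Ω) (hΩconv : Convex ℝ Ω)
    (hΩint : (interior Ω).Nonempty)
    (h₁ h₂ : ℝ × ℝ) (hh₁ : h₁.1 ^ 2 + h₁.2 ^ 2 = 1) (hh₂ : h₂.1 ^ 2 + h₂.2 ^ 2 = 1)
    (u : ℝ × ℝ → ℝ) (hu : MemU Ω u) :
    L1N Ω (uh h₁ u) ≤ 2 * (widthPar Ω h₁ / widthPar Ω h₂) * L1N Ω (uh h₂ u) := by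
  obtain ⟨huc, huconc, h0, -⟩ := hu
  obtain ⟨p, hp, hmax⟩ := hΩc.exists_isMaxOn (hΩint.mono interior_subset) huc
  have hup : 0 ≤ u p := huconc.nonneg_of_frontier_eq_zero hΩc h0 hp
  have hw₁ := widthPar_pos hΩc hΩint hh₁
  have hw₂ := widthPar_pos hΩc hΩint hh₂
  have hupper₁ := lintegral_enorm_fderiv_le hΩc huc huconc h0 hh₁ hup hmax
  have hupper₂ := lintegral_enorm_fderiv_le hΩc huc huconc h0 hh₂ hup hmax
  have hlower₂ := ofReal_le_lintegral_enorm_fderiv hΩc huc huconc h0 hh₂ hp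
  rw [L1N_uh_eq_toReal hΩconv, L1N_uh_eq_toReal hΩconv]
  calc _ ≤ 2 * u p * widthPar Ω h₁ := ENNReal.toReal_le_of_le_ofReal (by positivity) hupper₁
    _ = 2 * (widthPar Ω h₁ / widthPar Ω h₂) * (u p * widthPar Ω h₂) := by
        field_simp
    _ ≤ _ := by
        gcongr
        exact (ENNReal.ofReal_le_iff_le_toReal (hupper₂.trans_lt ENNReal.ofReal_lt_top).ne).1
          hlower₂
end

section
/- Let h₁, h₂ ∈ ℝ² be non-collinear unit vectors and let w₁, w₂ be the widths of Ω parallel to h₁ and to h₂, respectively. Then sup{ ‖u_{h₁}‖₁ / ‖u_{h₂}‖₁ : u ∈ 𝒰_Ω, u ≢ 0 } = 2 w₁ / w₂ if and only if there exists a straight line parallel to h₂ that intersects both of the two edges of Ω parallel to h₁ (i.e. the line meets Ω ∩ ℓ⁺ and Ω ∩ ℓ⁻, where ℓ⁺, ℓ⁻ are the two lines of support of Ω parallel to h₁). -/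
open Set MeasureTheory
open scoped ENNReal

theorem lintegral_enorm_rightDeriv_of_nonneg {g g' : ℝ → ℝ} {a b : ℝ} (hab : a ≤ b)
    (hcont : ContinuousOn g (Icc a b))
    (hderiv : ∀ x ∈ Ioo a b, HasDerivWithinAt g (g' x) (Ioi x) x)
    (hpos : ∀ x ∈ Ioo a b, 0 ≤ g' x) :
    ∫⁻ x in Ioo a b, ‖g' x‖ₑ = ENNReal.ofReal (g b - g a) := by
  have h_int := intervalIntegral.integrableOn_deriv_right_of_nonneg hcont hderiv hpos
  have h := intervalIntegral.integral_eq_sub_of_hasDeriv_right_of_le hab hcont hderiv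
    ((intervalIntegrable_iff_integrableOn_Ioc_of_le hab).2 h_int)
  rw [← h, intervalIntegral.integral_of_le hab, integral_Ioc_eq_integral_Ioo,
    ofReal_integral_eq_lintegral_ofReal (h_int.mono_set Ioo_subset_Ioc_self)
      ((ae_restrict_iff' measurableSet_Ioo).2 (Filter.Eventually.of_forall hpos))]
  exact setLIntegral_congr_fun measurableSet_Ioo fun x hx =>
    Real.enorm_of_nonneg (hpos x hx)

/-- The total variation of a concave function on an interval vanishing at the endpoints is
twice its maximum. -/
theorem ConcaveOn.lintegral_enorm_rightDeriv {f : ℝ → ℝ} {a b c : ℝ}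
    (hf : ConcaveOn ℝ (Icc a b) f) (hcont : ContinuousOn f (Icc a b)) (hc : c ∈ Icc a b)
    (hmax : ∀ x ∈ Icc a b, f x ≤ f c) (ha : f a = 0) (hb : f b = 0) :
    ∫⁻ x in Ioo a b, ‖derivWithin f (Ioi x) x‖ₑ = ENNReal.ofReal (2 * f c) := by
  have h0 : 0 ≤ f c := ha ▸ hmax a (left_mem_Icc.2 (hc.1.trans hc.2))
  have hd : ∀ x ∈ Ioo a b, HasDerivWithinAt f (derivWithin f (Ioi x) x) (Ioi x) x := by
    intro x hx
    have := (hf.neg.differentiableWithinAt_Ioi_of_mem_interior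
      (x := x) (by rwa [interior_Icc])).neg
    simpa using this.hasDerivWithinAt
  have hleft := lintegral_enorm_rightDeriv_of_nonneg hc.1
    (hcont.mono (Icc_subset_Icc_right hc.2))
    (fun x hx => hd x ⟨hx.1, hx.2.trans_le hc.2⟩) (fun x hx => by
      have := hf.slope_le_of_hasDerivWithinAt_Ioi ⟨hx.1.le, hx.2.le.trans hc.2⟩ hc hx.2
        (hd x ⟨hx.1, hx.2.trans_le hc.2⟩)
      refine le_trans ?_ this
      rw [slope_def_field]
      exact div_nonneg (sub_nonneg.2 (hmax x ⟨hx.1.le, hx.2.le.trans hc.2⟩))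
        (sub_nonneg.2 hx.2.le))
  have hright := lintegral_enorm_rightDeriv_of_nonneg (g := fun x => - f x)
    (g' := fun x => - derivWithin f (Ioi x) x) hc.2
    (hcont.mono (Icc_subset_Icc_left hc.1)).neg
    (fun x hx => (hd x ⟨hc.1.trans_lt hx.1, hx.2⟩).neg) (fun x hx => by
      have hx' : x ∈ Ioo a b := ⟨hc.1.trans_lt hx.1, hx.2⟩
      have h_int : x ∈ interior (Icc a b) := by rwa [interior_Icc]
      have := (hf.neg.slope_le_leftDeriv hc (Ioo_subset_Icc_self hx') hx.1
        (hf.neg.differentiableWithinAt_Iio_of_mem_interior h_int)).trans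
        (hf.neg.leftDeriv_le_rightDeriv_of_mem_interior h_int)
      rw [derivWithin.neg (s := Ioi x)] at this
      refine le_trans ?_ this
      rw [slope_def_field]
      refine div_nonneg (sub_nonneg.2 ?_) (sub_nonneg.2 hx.1.le)
      exact neg_le_neg (hmax x (Ioo_subset_Icc_self hx')))
  simp only [enorm_neg, hb, ha] at hleft hright
  have hunion : (Ioo a c ∪ Ioo c b : Set ℝ) =ᵐ[volume] Ioo a b := by
    refine (Ioo_ae_eq_Ioc.union Ioo_ae_eq_Ioc).trans ?_
    rw [Ioc_union_Ioc_eq_Ioc hc.1 hc.2]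
    exact Ioo_ae_eq_Ioc.symm
  rw [← setLIntegral_congr hunion, lintegral_union measurableSet_Ioo, hleft, hright,
    sub_zero, neg_zero, zero_sub, neg_neg, ← ENNReal.ofReal_add h0 h0, two_mul]
  · exact Set.disjoint_left.2 fun x hx hx' => (hx.2.trans hx'.1).false

/-- A concave function is differentiable almost everywhere in the interior of its domain. -/
theorem ConcaveOn.ae_differentiableAt_of_mem_interior {E : Type*} [NormedAddCommGroup E]
    [NormedSpace ℝ E] [FiniteDimensional ℝ E] [MeasurableSpace E] [BorelSpace E]
    (μ : Measure E) [μ.IsAddHaarMeasure] {s : Set E} {f : E → ℝ} (hf : ConcaveOn ℝ s f) :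
    ∀ᵐ x ∂μ, x ∈ interior s → DifferentiableAt ℝ f x := by
  have : ProperSpace E := FiniteDimensional.proper ℝ E
  refine measure_null_of_locally_null _ fun x hx => ?_
  have hx : x ∈ interior s ∧ ¬ DifferentiableAt ℝ f x := by simpa using hx
  obtain ⟨K, t, ht, hK⟩ := hf.locallyLipschitzOn_interior hx.1
  rw [isOpen_interior.nhdsWithin_eq hx.1] at ht
  obtain ⟨o, hot, ho, hxo⟩ := mem_nhds_iff.1 ht
  refine ⟨_, inter_mem_nhdsWithin _ (ho.mem_nhds hxo), ?_⟩
  have := (hK.mono hot).ae_differentiableWithinAt_of_mem (μ := μ)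
  refine measure_mono_null ?_ this
  rintro y ⟨hy, hyo⟩ h
  have hy : y ∈ interior s ∧ ¬ DifferentiableAt ℝ f y := by simpa using hy
  exact hy.2 ((h hyo).differentiableAt (ho.mem_nhds hyo))

/-- The coordinate of `z` along the unit normal to `h`. -/
def normalCoord (h : ℝ × ℝ) (z : ℝ × ℝ) : ℝ := -h.2 * z.1 + h.1 * z.2

/-- The orthogonal change of coordinates sending `(s, t)` to the point with normal coordinate `s`
and coordinate `t` along `h`. -/
noncomputable def rotate (h : ℝ × ℝ) : ℝ × ℝ →ₗ[ℝ] ℝ × ℝ :=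
  Matrix.toLin (Module.Basis.finTwoProd ℝ) (Module.Basis.finTwoProd ℝ) !![-h.2, h.1; h.1, h.2]

theorem rotate_apply (h w : ℝ × ℝ) :
    rotate h w = (-h.2 * w.1 + h.1 * w.2, h.1 * w.1 + h.2 * w.2) := by
  simp [rotate, Matrix.toLin_finTwoProd]

theorem measurePreserving_rotate {h : ℝ × ℝ} (hh : h.1 ^ 2 + h.2 ^ 2 = 1) :
    MeasurePreserving (rotate h) := by
  have hdet : LinearMap.det (rotate h) = -1 := by
    rw [rotate, LinearMap.det_toLin, Matrix.det_fin_two_of]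
    linarith
  refine ⟨(rotate h).continuous_of_finiteDimensional.measurable, ?_⟩
  rw [Measure.map_linearMap_addHaar_eq_smul_addHaar _ (by rw [hdet]; norm_num), hdet]
  norm_num

theorem Convex.exists_eq_Ioo {I : Set ℝ} (hI : Convex ℝ I) (ho : IsOpen I) (hne : I.Nonempty)
    (hb : Bornology.IsBounded I) : ∃ a b, a < b ∧ I = Ioo a b := by
  have hsub : I ⊆ Ioo (sInf I) (sSup I) := by
    have h1 := subset_Icc_csInf_csSup hb.bddBelow hb.bddAbove
    simpa only [interior_Icc] using interior_maximal h1 ho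
  obtain ⟨x, hx⟩ := hne
  refine ⟨sInf I, sSup I, (hsub hx).1.trans (hsub hx).2, hsub.antisymm ?_⟩
  exact IsConnected.Ioo_csInf_csSup_subset ⟨⟨x, hx⟩, hI.isPreconnected⟩ hb.bddBelow hb.bddAbove

theorem normalCoord_rotate {h : ℝ × ℝ} (hh : h.1 ^ 2 + h.2 ^ 2 = 1) (w : ℝ × ℝ) :
    normalCoord h (rotate h w) = w.1 := by
  rw [rotate_apply, normalCoord]
  linear_combination w.1 * hh

theorem rotate_normalCoord {h : ℝ × ℝ} (hh : h.1 ^ 2 + h.2 ^ 2 = 1) (z : ℝ × ℝ) :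
    rotate h (normalCoord h z, h.1 * z.1 + h.2 * z.2) = z := by
  rw [rotate_apply]
  ext
  · simp only [normalCoord]
    linear_combination z.1 * hh
  · simp only [normalCoord]
    linear_combination z.2 * hh

theorem hasDerivAt_rotate (h : ℝ × ℝ) (s t : ℝ) :
    HasDerivAt (fun t => rotate h (s, t)) h t := by
  simp only [rotate_apply]
  refine HasDerivAt.prodMk ?_ ?_
  · simpa using ((hasDerivAt_id t).const_mul h.1).const_add (-h.2 * s)
  · simpa using ((hasDerivAt_id t).const_mul h.2).const_add (h.1 * s)

theorem concaveOn_comp_rotate {S : Set (ℝ × ℝ)} {u : ℝ × ℝ → ℝ} (hu : ConcaveOn ℝ S u)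
    (h : ℝ × ℝ) (s : ℝ) :
    ConcaveOn ℝ ((fun t => rotate h (s, t)) ⁻¹' S) fun t => u (rotate h (s, t)) := by
  have hline : ∀ x y a b : ℝ, a + b = 1 →
      rotate h (s, a • x + b • y) = a • rotate h (s, x) + b • rotate h (s, y) := by
    intro x y a b hab
    rw [← map_smul, ← map_smul, ← map_add]
    congr 1
    ext
    · simp only [Prod.smul_mk, Prod.mk_add_mk, smul_eq_mul, ← add_mul, hab, one_mul]
    · simp
  refine ⟨fun x hx y hy a b ha hb hab => ?_, fun x hx y hy a b ha hb hab => ?_⟩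
  · simp only [mem_preimage, hline x y a b hab]
    exact hu.1 hx hy ha hb hab
  · simp only [hline x y a b hab]
    exact hu.2 hx hy ha hb hab

/-- The chord of a planar convex body along a line parallel to `h` that meets its interior. -/
theorem exists_chord {Ω : Set (ℝ × ℝ)} (hΩc : IsCompact Ω) (hΩ : Convex ℝ Ω) {h : ℝ × ℝ}
    (hh : h.1 ^ 2 + h.2 ^ 2 = 1) {s : ℝ} (hne : ∃ t, rotate h (s, t) ∈ interior Ω) :
    ∃ a b, a < b ∧ (∀ t, rotate h (s, t) ∈ interior Ω ↔ t ∈ Ioo a b) ∧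
      (∀ t ∈ Icc a b, rotate h (s, t) ∈ Ω) ∧
      rotate h (s, a) ∈ frontier Ω ∧ rotate h (s, b) ∈ frontier Ω := by
  have hcont : Continuous fun t => rotate h (s, t) :=
    continuous_iff_continuousAt.2 fun t => (hasDerivAt_rotate h s t).continuousAt
  set I : Set ℝ := (fun t => rotate h (s, t)) ⁻¹' interior Ω with hI
  have hconv : Convex ℝ I :=
    (concaveOn_comp_rotate (concaveOn_const (0 : ℝ) hΩ.interior) h s).1
  have hb : Bornology.IsBounded I := by
    have hc : IsCompact ((fun z : ℝ × ℝ => h.1 * z.1 + h.2 * z.2) '' Ω) :=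
      hΩc.image (by fun_prop)
    refine hc.isBounded.subset fun t ht => ⟨_, interior_subset ht, ?_⟩
    simp only [rotate_apply]
    linear_combination t * hh
  obtain ⟨a, b, hab, hIab⟩ := hconv.exists_eq_Ioo (isOpen_interior.preimage hcont) hne hb
  have hmem : ∀ t, rotate h (s, t) ∈ interior Ω ↔ t ∈ Ioo a b := fun t => by
    rw [← hIab, hI, mem_preimage]
  have hIcc : ∀ t ∈ Icc a b, rotate h (s, t) ∈ Ω := by
    have : closure I ⊆ (fun t => rotate h (s, t)) ⁻¹' Ω :=
      closure_minimal (preimage_mono interior_subset) (hΩc.isClosed.preimage hcont)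
    rw [hIab, closure_Ioo hab.ne] at this
    exact this
  refine ⟨a, b, hab, hmem, hIcc, ?_, ?_⟩ <;> rw [hΩc.isClosed.frontier_eq]
  · exact ⟨hIcc a (left_mem_Icc.2 hab.le), fun h' => lt_irrefl _ ((hmem a).1 h').1⟩
  · exact ⟨hIcc b (right_mem_Icc.2 hab.le), fun h' => lt_irrefl _ ((hmem b).1 h').2⟩

theorem nonneg_of_concaveOn_of_frontier {Ω : Set (ℝ × ℝ)} (hΩc : IsCompact Ω)
    {u : ℝ × ℝ → ℝ} (hu : ConcaveOn ℝ Ω u) (hu0 : ∀ z ∈ frontier Ω, u z = 0) {z : ℝ × ℝ}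
    (hz : z ∈ Ω) : 0 ≤ u z := by
  by_cases hzi : z ∈ interior Ω
  swap
  · exact (hu0 z (hΩc.isClosed.frontier_eq ▸ ⟨hz, hzi⟩)).ge
  have hh : ((1, 0) : ℝ × ℝ).1 ^ 2 + ((1, 0) : ℝ × ℝ).2 ^ 2 = 1 := by norm_num
  rw [← rotate_normalCoord hh z] at hzi ⊢
  obtain ⟨a, b, hab, hmem, hIcc, ha, hb⟩ := exists_chord hΩc hu.1 hh ⟨_, hzi⟩
  have hc := (concaveOn_comp_rotate hu (1, 0) (normalCoord (1, 0) z)).subset hIcc (convex_Icc a b)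
  have := hc.min_le_of_mem_Icc (left_mem_Icc.2 hab.le) (right_mem_Icc.2 hab.le)
    (Ioo_subset_Icc_self ((hmem _).1 hzi))
  simpa only [hu0 _ ha, hu0 _ hb, min_self] using this

/-- The `L¹` norm of a directional derivative, sliced along the lines parallel to `h`. -/
theorem lintegral_enorm_uh {Ω : Set (ℝ × ℝ)} (hΩc : IsCompact Ω) {u : ℝ × ℝ → ℝ}
    (hcont : ContinuousOn u Ω) (hu : ConcaveOn ℝ Ω u) (hu0 : ∀ z ∈ frontier Ω, u z = 0)
    {h : ℝ × ℝ} (hh : h.1 ^ 2 + h.2 ^ 2 = 1) {M : ℝ → ℝ}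
    (hM : ∀ z ∈ Ω, u z ≤ M (normalCoord h z))
    (hM' : ∀ s ∈ normalCoord h '' Ω, ∃ z ∈ Ω, normalCoord h z = s ∧ u z = M s) :
    ∫⁻ z in Ω, ‖uh h u z‖ₑ = ∫⁻ s in normalCoord h '' Ω, ENNReal.ofReal (2 * M s) := by
  have hfr : ∀ z ∈ Ω, z ∉ interior Ω → u z = 0 := fun z hz hzi =>
    hu0 z (hΩc.isClosed.frontier_eq ▸ ⟨hz, hzi⟩)
  have hmeas : Measurable fun z => ‖uh h u z‖ₑ := (measurable_fderiv_apply_const ℝ u h).enorm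
  have hmeas' := hmeas.indicator (isOpen_interior (s := Ω)).measurableSet
  have hmeas'' : Measurable fun w => (interior Ω).indicator (fun z => ‖uh h u z‖ₑ) (rotate h w) :=
    hmeas'.comp (measurePreserving_rotate hh).measurable
  have himg : MeasurableSet (normalCoord h '' Ω) :=
    (hΩc.image (by unfold normalCoord; fun_prop)).measurableSet
  have hdiff := (measurePreserving_rotate hh).quasiMeasurePreserving.ae
    (hu.ae_differentiableAt_of_mem_interior volume)
  rw [setLIntegral_congr (interior_ae_eq_of_null_frontier (hu.1.addHaar_frontier volume)).symm,
    ← lintegral_indicator isOpen_interior.measurableSet,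
    ← (measurePreserving_rotate hh).lintegral_comp hmeas', Measure.volume_eq_prod,
    lintegral_prod _ hmeas''.aemeasurable,
    ← lintegral_indicator himg]
  rw [Measure.volume_eq_prod] at hdiff
  refine lintegral_congr_ae ?_
  filter_upwards [Measure.ae_ae_of_ae_prod hdiff] with s hs
  by_cases hne : ∃ t, rotate h (s, t) ∈ interior Ω
  · obtain ⟨a, b, hab, hmem, hIcc, ha, hb⟩ := exists_chord hΩc hu.1 hh hne
    have hline : Continuous fun t => rotate h (s, t) :=
      continuous_iff_continuousAt.2 fun t => (hasDerivAt_rotate h s t).continuousAt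
    have hfcont : ContinuousOn (fun t => u (rotate h (s, t))) (Icc a b) :=
      hcont.comp hline.continuousOn hIcc
    obtain ⟨c, hc, hmax⟩ := isCompact_Icc.exists_isMaxOn (nonempty_Icc.2 hab.le) hfcont
    have key := ((concaveOn_comp_rotate hu h s).subset hIcc
      (convex_Icc a b)).lintegral_enorm_rightDeriv hfcont hc hmax (hu0 _ ha) (hu0 _ hb)
    have hsmem : s ∈ normalCoord h '' Ω := ⟨_, hIcc c hc, normalCoord_rotate hh _⟩
    have hMs : u (rotate h (s, c)) = M s := by
      refine le_antisymm (by simpa only [normalCoord_rotate hh] using hM _ (hIcc c hc)) ?_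
      obtain ⟨z, hz, hzs, hzM⟩ := hM' s hsmem
      rw [← hzM]
      by_cases hzi : z ∈ interior Ω
      · rw [← rotate_normalCoord hh z, hzs] at hzi ⊢
        exact hmax (Ioo_subset_Icc_self ((hmem _).1 hzi))
      · rw [hfr z hz hzi, ← hu0 _ ha]
        exact hmax (left_mem_Icc.2 hab.le)
    rw [indicator_of_mem hsmem, ← hMs, ← key, ← lintegral_indicator measurableSet_Ioo]
    refine lintegral_congr_ae ?_
    filter_upwards [hs] with t ht
    by_cases hti : rotate h (s, t) ∈ interior Ω
    · rw [indicator_of_mem hti, indicator_of_mem ((hmem t).1 hti)]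
      have hd := (ht hti).hasFDerivAt.comp_hasDerivAt t (hasDerivAt_rotate h s t)
      have hd' := hd.hasDerivWithinAt.derivWithin (uniqueDiffWithinAt_Ioi t)
      exact congrArg _ hd'.symm
    · rw [indicator_of_notMem hti, indicator_of_notMem (fun h' => hti ((hmem t).2 h'))]
  · push Not at hne
    simp only [indicator_of_notMem (hne _), lintegral_zero]
    by_cases hsmem : s ∈ normalCoord h '' Ω
    · obtain ⟨z, hz, hzs, hzM⟩ := hM' s hsmem
      rw [indicator_of_mem hsmem, ← hzM, hfr z hz]
      · simp
      · rw [← rotate_normalCoord hh z, hzs]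
        exact hne _
    · rw [indicator_of_notMem hsmem]

theorem continuous_normalCoord (h : ℝ × ℝ) : Continuous (normalCoord h) := by
  unfold normalCoord
  fun_prop

theorem normalCoord_combo (h x y : ℝ × ℝ) (a b : ℝ) :
    normalCoord h (a • x + b • y) = a * normalCoord h x + b * normalCoord h y := by
  simp only [normalCoord, Prod.fst_add, Prod.snd_add, Prod.smul_fst, Prod.smul_snd, smul_eq_mul]
  ring

theorem image_normalCoord {Ω : Set (ℝ × ℝ)} (hΩc : IsCompact Ω) (hΩ : Convex ℝ Ω)
    (hne : Ω.Nonempty) (h : ℝ × ℝ) :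
    normalCoord h '' Ω = Icc (sInf (normalCoord h '' Ω)) (sSup (normalCoord h '' Ω)) :=
  eq_Icc_of_connected_compact
    ⟨hne.image _, hΩ.isPreconnected.image _ (continuous_normalCoord h).continuousOn⟩
    (hΩc.image (continuous_normalCoord h))

theorem normalCoord_mem_Ioo_of_mem_interior {Ω : Set (ℝ × ℝ)} {h : ℝ × ℝ}
    (hh : h.1 ^ 2 + h.2 ^ 2 = 1) {a b : ℝ} (himg : normalCoord h '' Ω = Icc a b) {z : ℝ × ℝ}
    (hz : z ∈ interior Ω) : normalCoord h z ∈ Ioo a b := by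
  set t := h.1 * z.1 + h.2 * z.2 with ht
  have hcont : Continuous fun s => rotate h (s, t) := by
    simp only [rotate_apply]
    fun_prop
  rw [← interior_Icc, ← himg]
  refine interior_maximal (s := normalCoord h '' Ω) ?_
    (isOpen_interior.preimage hcont : IsOpen ((fun s => rotate h (s, t)) ⁻¹' interior Ω)) ?_
  · exact fun s hs => ⟨_, interior_subset hs, normalCoord_rotate hh _⟩
  · simpa only [mem_preimage, ht, rotate_normalCoord hh] using hz

theorem L1N_uh_eq (Ω : Set (ℝ × ℝ)) (h : ℝ × ℝ) (u : ℝ × ℝ → ℝ) :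
    L1N Ω (uh h u) = (∫⁻ z in Ω, ‖uh h u z‖ₑ).toReal :=
  integral_norm_eq_lintegral_enorm
    (measurable_fderiv_apply_const ℝ u h).aestronglyMeasurable

theorem exists_sliceMax {Ω : Set (ℝ × ℝ)} (hΩc : IsCompact Ω) {u : ℝ × ℝ → ℝ}
    (hcont : ContinuousOn u Ω) (h : ℝ × ℝ) :
    ∃ M : ℝ → ℝ, (∀ z ∈ Ω, u z ≤ M (normalCoord h z)) ∧
      ∀ s ∈ normalCoord h '' Ω, ∃ z ∈ Ω, normalCoord h z = s ∧ u z = M s := by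
  have hex : ∀ s, ∃ m : ℝ, (∀ z ∈ Ω, normalCoord h z = s → u z ≤ m) ∧
      (s ∈ normalCoord h '' Ω → ∃ z ∈ Ω, normalCoord h z = s ∧ u z = m) := by
    intro s
    by_cases hs : s ∈ normalCoord h '' Ω
    · obtain ⟨z₀, hz₀, hz₀s⟩ := hs
      obtain ⟨z, hz, hmax⟩ := (hΩc.inter_right
        (isClosed_singleton.preimage (continuous_normalCoord h) :
          IsClosed (normalCoord h ⁻¹' {s}))).exists_isMaxOn ⟨z₀, hz₀, hz₀s⟩
        (hcont.mono inter_subset_left)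
      exact ⟨u z, fun y hy hys => hmax ⟨hy, hys⟩, fun _ => ⟨z, hz.1, hz.2, rfl⟩⟩
    · exact ⟨0, fun z hz hzs => (hs ⟨z, hz, hzs⟩).elim, fun h' => (hs h').elim⟩
  choose M hM hM' using hex
  exact ⟨M, fun z hz => hM _ z hz rfl, hM'⟩

theorem L1N_uh_le {Ω : Set (ℝ × ℝ)} (hΩc : IsCompact Ω) {u : ℝ × ℝ → ℝ} (hu : MemU Ω u)
    {h : ℝ × ℝ} (hh : h.1 ^ 2 + h.2 ^ 2 = 1) {a b : ℝ} (hab : a ≤ b)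
    (himg : normalCoord h '' Ω = Icc a b) {g : ℝ → ℝ} (hg : IntegrableOn g (Icc a b))
    (hg0 : ∀ s ∈ Icc a b, 0 ≤ g s) (hug : ∀ z ∈ Ω, u z ≤ g (normalCoord h z)) :
    L1N Ω (uh h u) ≤ 2 * ∫ s in a..b, g s := by
  obtain ⟨M, hM, hM'⟩ := exists_sliceMax hΩc hu.1 h
  rw [L1N_uh_eq, lintegral_enorm_uh hΩc hu.1 hu.2.1 hu.2.2.1 hh hM hM', himg,
    intervalIntegral.integral_of_le hab, ← integral_Icc_eq_integral_Ioc, ← integral_const_mul]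
  refine ENNReal.toReal_le_of_le_ofReal (setIntegral_nonneg measurableSet_Icc fun s hs =>
    mul_nonneg zero_le_two (hg0 s hs)) ?_
  rw [ofReal_integral_eq_lintegral_ofReal (hg.const_mul 2)
    ((ae_restrict_iff' measurableSet_Icc).2 (Filter.Eventually.of_forall fun s hs =>
      mul_nonneg zero_le_two (hg0 s hs)))]
  refine setLIntegral_mono' measurableSet_Icc fun s hs => ENNReal.ofReal_le_ofReal ?_
  obtain ⟨z, hz, rfl, hzM⟩ := hM' s (himg ▸ hs)
  linarith [hug z hz]

theorem le_L1N_uh {Ω : Set (ℝ × ℝ)} (hΩc : IsCompact Ω) {u : ℝ × ℝ → ℝ} (hu : MemU Ω u)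
    {h : ℝ × ℝ} (hh : h.1 ^ 2 + h.2 ^ 2 = 1) {a b : ℝ} (hab : a ≤ b)
    (himg : normalCoord h '' Ω = Icc a b) {g : ℝ → ℝ} (hg : IntegrableOn g (Icc a b))
    (hg0 : ∀ s ∈ Icc a b, 0 ≤ g s)
    (hug : ∀ s ∈ Icc a b, ∃ z ∈ Ω, normalCoord h z = s ∧ g s ≤ u z) :
    2 * ∫ s in a..b, g s ≤ L1N Ω (uh h u) := by
  obtain ⟨M, hM, hM'⟩ := exists_sliceMax hΩc hu.1 h
  obtain ⟨K, hK⟩ := (hΩc.image_of_continuousOn hu.1).bddAbove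
  rw [L1N_uh_eq, lintegral_enorm_uh hΩc hu.1 hu.2.1 hu.2.2.1 hh hM hM', himg,
    intervalIntegral.integral_of_le hab, ← integral_Icc_eq_integral_Ioc, ← integral_const_mul]
  rw [← ENNReal.ofReal_le_iff_le_toReal,
    ofReal_integral_eq_lintegral_ofReal (hg.const_mul 2)
      ((ae_restrict_iff' measurableSet_Icc).2 (Filter.Eventually.of_forall fun s hs =>
        mul_nonneg zero_le_two (hg0 s hs)))]
  · refine setLIntegral_mono' measurableSet_Icc fun s hs => ENNReal.ofReal_le_ofReal ?_
    obtain ⟨z, hz, rfl, hzM⟩ := hug s hs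
    linarith [hM z hz]
  · refine ne_top_of_le_ne_top (b := ∫⁻ s in Icc a b, ENNReal.ofReal (2 * K)) ?_ ?_
    · simp [ENNReal.mul_eq_top]
    · refine setLIntegral_mono' measurableSet_Icc fun s hs => ENNReal.ofReal_le_ofReal ?_
      obtain ⟨z, hz, rfl, hzM⟩ := hM' s (himg ▸ hs)
      linarith [hK (mem_image_of_mem u hz)]

/-- The concave trapezoid on `[a, b]` which vanishes at `a`, `b` and equals `1` on `[p, q]`. -/
noncomputable def trapezoid (a b p q s : ℝ) : ℝ :=
  min 1 (min ((s - a) / (p - a)) ((b - s) / (b - q)))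

theorem continuous_trapezoid (a b p q : ℝ) : Continuous (trapezoid a b p q) := by
  unfold trapezoid
  fun_prop

theorem trapezoid_nonneg {a b p q s : ℝ} (hp : a < p) (hq : q < b) (hs : s ∈ Icc a b) :
    0 ≤ trapezoid a b p q s :=
  le_min zero_le_one (le_min (div_nonneg (sub_nonneg.2 hs.1) (sub_pos.2 hp).le)
    (div_nonneg (sub_nonneg.2 hs.2) (sub_pos.2 hq).le))

theorem trapezoid_of_le_left {a b p q s : ℝ} (hp : a < p) (hpq : p ≤ q) (hq : q < b)
    (hs : s ≤ p) : trapezoid a b p q s = (s - a) / (p - a) := by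
  have h1 : (s - a) / (p - a) ≤ 1 := (div_le_one (sub_pos.2 hp)).2 (by linarith)
  have h2 : 1 ≤ (b - s) / (b - q) := (one_le_div (sub_pos.2 hq)).2 (by linarith)
  rw [trapezoid, min_eq_left (h1.trans h2), min_eq_right h1]

theorem trapezoid_of_right_le {a b p q s : ℝ} (hp : a < p) (hpq : p ≤ q) (hq : q < b)
    (hs : q ≤ s) : trapezoid a b p q s = (b - s) / (b - q) := by
  have h1 : (b - s) / (b - q) ≤ 1 := (div_le_one (sub_pos.2 hq)).2 (by linarith)
  have h2 : 1 ≤ (s - a) / (p - a) := (one_le_div (sub_pos.2 hp)).2 (by linarith)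
  rw [trapezoid, min_eq_right (h1.trans h2), min_eq_right h1]

theorem trapezoid_of_mem_Icc {a b p q s : ℝ} (hp : a < p) (hq : q < b)
    (hs : s ∈ Icc p q) : trapezoid a b p q s = 1 :=
  min_eq_left (le_min ((one_le_div (sub_pos.2 hp)).2 (by linarith [hs.1]))
    ((one_le_div (sub_pos.2 hq)).2 (by linarith [hs.2])))

theorem integral_trapezoid {a b p q : ℝ} (hp : a < p) (hpq : p ≤ q) (hq : q < b) :
    ∫ s in a..b, trapezoid a b p q s = ((b - a) + (q - p)) / 2 := by
  have hi : ∀ x y, IntervalIntegrable (trapezoid a b p q) volume x y := fun x y =>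
    (continuous_trapezoid a b p q).intervalIntegrable x y
  have hl : ∫ s in a..p, trapezoid a b p q s = (p - a) / 2 := by
    rw [intervalIntegral.integral_congr (g := fun s => (s - a) / (p - a)) fun s hs =>
      trapezoid_of_le_left hp hpq hq (uIcc_of_le hp.le ▸ hs).2]
    rw [intervalIntegral.integral_div, intervalIntegral.integral_sub (by simp) (by simp),
      integral_id, intervalIntegral.integral_const, smul_eq_mul]
    have := (sub_pos.2 hp).ne'
    field_simp
    ring
  have hm : ∫ s in p..q, trapezoid a b p q s = q - p := by
    rw [intervalIntegral.integral_congr (g := fun _ => (1 : ℝ)) fun s hs =>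
      trapezoid_of_mem_Icc hp hq (uIcc_of_le hpq ▸ hs)]
    simp
  have hr : ∫ s in q..b, trapezoid a b p q s = (b - q) / 2 := by
    rw [intervalIntegral.integral_congr (g := fun s => (b - s) / (b - q)) fun s hs =>
      trapezoid_of_right_le hp hpq hq (uIcc_of_le hq.le ▸ hs).1]
    rw [intervalIntegral.integral_div, intervalIntegral.integral_sub (by simp) (by simp),
      integral_id, intervalIntegral.integral_const, smul_eq_mul]
    have := (sub_pos.2 hq).ne'
    field_simp
    ring
  rw [← intervalIntegral.integral_add_adjacent_intervals (hi a q) (hi q b),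
    ← intervalIntegral.integral_add_adjacent_intervals (hi a p) (hi p q), hl, hm, hr]
  ring

theorem concaveOn_mul_normalCoord_add {S : Set (ℝ × ℝ)} (hS : Convex ℝ S) (h : ℝ × ℝ) (k l : ℝ) :
    ConcaveOn ℝ S fun z => k * normalCoord h z + l := by
  refine ⟨hS, fun x _ y _ a b _ _ hab => le_of_eq ?_⟩
  simp only [normalCoord_combo, smul_eq_mul]
  linear_combination l * hab

theorem exists_lipschitzWith_normalCoord (h : ℝ × ℝ) : ∃ K, LipschitzWith K (normalCoord h) := by
  let L : ℝ × ℝ →L[ℝ] ℝ :=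
    (-h.2) • ContinuousLinearMap.fst ℝ ℝ ℝ + h.1 • ContinuousLinearMap.snd ℝ ℝ ℝ
  exact ⟨_, L.lipschitz⟩

theorem LipschitzWith.mul_add_const {X : Type*} [PseudoMetricSpace X] {K : NNReal} {f : X → ℝ}
    (hf : LipschitzWith K f) (k l : ℝ) : LipschitzWith (‖k‖₊ * K) fun x => k * f x + l := by
  refine LipschitzWith.of_dist_le_mul fun x y => ?_
  rw [dist_add_right, Real.dist_eq, ← mul_sub, abs_mul, ← Real.dist_eq, NNReal.coe_mul, mul_assoc,
    coe_nnnorm, Real.norm_eq_abs]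
  exact mul_le_mul_of_nonneg_left (hf.dist_le_mul x y) (abs_nonneg k)

theorem trapezoid_normalCoord (h : ℝ × ℝ) (a b p q : ℝ) (z : ℝ × ℝ) :
    trapezoid a b p q (normalCoord h z) =
      min 1 (min ((p - a)⁻¹ * normalCoord h z + -a * (p - a)⁻¹)
        (-(b - q)⁻¹ * normalCoord h z + b * (b - q)⁻¹)) := by
  rw [trapezoid]
  congr 2 <;> ring

theorem concaveOn_trapezoid_normalCoord {S : Set (ℝ × ℝ)} (hS : Convex ℝ S) (h : ℝ × ℝ)
    (a b p q : ℝ) : ConcaveOn ℝ S fun z => trapezoid a b p q (normalCoord h z) := by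
  simp only [trapezoid_normalCoord]
  exact (concaveOn_const 1 hS).inf ((concaveOn_mul_normalCoord_add hS h _ _).inf
    (concaveOn_mul_normalCoord_add hS h _ _))

theorem exists_lipschitzWith_trapezoid_normalCoord (h : ℝ × ℝ) (a b p q : ℝ) :
    ∃ K, LipschitzWith K fun z => trapezoid a b p q (normalCoord h z) := by
  simp only [trapezoid_normalCoord]
  obtain ⟨K, hK⟩ := exists_lipschitzWith_normalCoord h
  exact ⟨_, (LipschitzWith.const (1 : ℝ)).min ((hK.mul_add_const _ _).min (hK.mul_add_const _ _))⟩

/-- The cone-shaped concave function on a convex body with apex above an interior point. -/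
theorem exists_concave_cone {E : Type*} [NormedAddCommGroup E] [NormedSpace ℝ E] {Ω : Set E}
    (hΩ : Convex ℝ Ω) {c : E} (hc : c ∈ interior Ω) :
    ∃ (v : E → ℝ) (K : NNReal), LipschitzWith K v ∧ ConcaveOn ℝ Ω v ∧
      (∀ z ∈ frontier Ω, v z = 0) ∧ (∀ z ∈ Ω, 0 ≤ v z) ∧ v c = 1 := by
  set S : Set E := (fun z => z + c) ⁻¹' Ω with hS
  have hSconv : Convex ℝ S := hΩ.translate_preimage_left c
  have hS0 : S ∈ nhds (0 : E) := by
    refine (continuous_add_const c).continuousAt.preimage_mem_nhds ?_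
    rw [zero_add]
    exact mem_interior_iff_mem_nhds.1 hc
  obtain ⟨K, hK⟩ := hSconv.lipschitz_gauge hS0
  have habs : Absorbent ℝ S := absorbent_nhds_zero hS0
  refine ⟨fun z => 1 - gauge S (z - c), _, (LipschitzWith.const 1).sub
    (hK.comp (LipschitzWith.id.sub (LipschitzWith.const c))), ⟨hΩ, ?_⟩, ?_, ?_, ?_⟩
  · intro x _ y _ a b ha hb hab
    have hxy : a • x + b • y - c = a • (x - c) + b • (y - c) := by
      rw [smul_sub, smul_sub, sub_add_sub_comm, ← add_smul, hab, one_smul]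
    have := gauge_add_le hSconv habs (a • (x - c)) (b • (y - c))
    rw [gauge_smul_of_nonneg ha, gauge_smul_of_nonneg hb, ← hxy] at this
    simp only [smul_eq_mul] at this ⊢
    linarith
  · intro z hz
    have : z - c ∈ frontier S := by
      rw [hS, ← Homeomorph.coe_addRight, ← Homeomorph.preimage_frontier]
      simpa using hz
    simp [(gauge_eq_one_iff_mem_frontier hSconv hS0).2 this]
  · intro z hz
    have : z - c ∈ S := by simpa [hS] using hz
    exact sub_nonneg.2 (gauge_le_one_of_mem this)
  · simp

theorem LipschitzWith.memU {Ω : Set (ℝ × ℝ)} {u : ℝ × ℝ → ℝ} {K : NNReal}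
    (hK : LipschitzWith K u) (hu : ConcaveOn ℝ Ω u) (hu0 : ∀ z ∈ frontier Ω, u z = 0) :
    MemU Ω u :=
  ⟨hK.continuous.continuousOn, hu, hu0, K, fun _ _ _ hg => hg.le_of_lipschitz hK⟩

theorem mul_width_add_le_L1N_uh {Ω : Set (ℝ × ℝ)} (hΩc : IsCompact Ω) {u : ℝ × ℝ → ℝ}
    (hu : MemU Ω u) {h : ℝ × ℝ} (hh : h.1 ^ 2 + h.2 ^ 2 = 1) {a b : ℝ}
    (himg : normalCoord h '' Ω = Icc a b) {p q : ℝ × ℝ} (hp : p ∈ Ω) (hq : q ∈ Ω) {k : ℝ}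
    (hk : 0 < k) (hkp : k ≤ u p) (hkq : k ≤ u q) :
    k * ((b - a) + |normalCoord h q - normalCoord h p|) ≤ L1N Ω (uh h u) := by
  wlog hpq : normalCoord h p ≤ normalCoord h q generalizing p q
  · rw [abs_sub_comm]
    exact this hq hp hkq hkp (le_of_not_ge hpq)
  rw [abs_of_nonneg (sub_nonneg.2 hpq)]
  have hinner : ∀ z ∈ Ω, k ≤ u z → normalCoord h z ∈ Ioo a b := by
    intro z hz hkz
    refine normalCoord_mem_Ioo_of_mem_interior hh himg ?_
    by_contra hzi
    have := hu.2.2.1 z (hΩc.isClosed.frontier_eq ▸ ⟨hz, hzi⟩)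
    linarith
  have hP := hinner p hp hkp
  have hQ := hinner q hq hkq
  have hab : a ≤ b := (hP.1.trans hP.2).le
  obtain ⟨za, hza, hna⟩ : a ∈ normalCoord h '' Ω := himg ▸ left_mem_Icc.2 hab
  obtain ⟨zb, hzb, hnb⟩ : b ∈ normalCoord h '' Ω := himg ▸ right_mem_Icc.2 hab
  have hnn : ∀ z ∈ Ω, 0 ≤ u z := fun z hz =>
    nonneg_of_concaveOn_of_frontier hΩc hu.2.1 hu.2.2.1 hz
  -- points on a segment, parametrised by the normal coordinate
  have hcombo : ∀ x ∈ Ω, ∀ y ∈ Ω, ∀ i j : ℝ, i ≤ u x → j ≤ u y → ∀ l ∈ Icc (0 : ℝ) 1, ∀ s r : ℝ,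
      s = (1 - l) * normalCoord h x + l * normalCoord h y → r = (1 - l) * i + l * j →
      ∃ z ∈ Ω, normalCoord h z = s ∧ r ≤ u z := by
    rintro x hx y hy i j hi hj l ⟨hl0, hl1⟩ s r hs hr
    have hl1' : 0 ≤ 1 - l := sub_nonneg.2 hl1
    refine ⟨(1 - l) • x + l • y, hu.2.1.1 hx hy hl1' hl0 (by ring), ?_, ?_⟩
    · rw [normalCoord_combo, hs]
    · refine le_trans ?_ (hu.2.1.2 hx hy hl1' hl0 (by ring))
      rw [hr, smul_eq_mul, smul_eq_mul]
      gcongr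
  have hPa := sub_pos.2 hP.1
  have hQb := sub_pos.2 hQ.2
  have key := le_L1N_uh hΩc hu hh hab himg
    (g := fun s => k * trapezoid a b (normalCoord h p) (normalCoord h q) s)
    ((continuous_const.mul (continuous_trapezoid _ _ _ _)).integrableOn_Icc)
    (fun s hs => mul_nonneg hk.le (trapezoid_nonneg hP.1 hQ.2 hs)) (fun s hs => by
      rcases le_total s (normalCoord h p) with hsp | hsp
      · rw [trapezoid_of_le_left hP.1 hpq hQ.2 hsp]
        refine hcombo za hza p hp 0 k (hnn _ hza) hkp ((s - a) / (normalCoord h p - a))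
          ⟨div_nonneg (sub_nonneg.2 hs.1) hPa.le, (div_le_one hPa).2 (by linarith)⟩ _ _ ?_ (by ring)
        rw [hna]
        field_simp
        ring
      rcases le_total s (normalCoord h q) with hsq | hsq
      · rw [trapezoid_of_mem_Icc hP.1 hQ.2 ⟨hsp, hsq⟩]
        rcases hpq.eq_or_lt with heq | hlt
        · exact ⟨p, hp, le_antisymm hsp (heq ▸ hsq), by linarith⟩
        have hd := sub_pos.2 hlt
        refine hcombo p hp q hq k k hkp hkq
          ((s - normalCoord h p) / (normalCoord h q - normalCoord h p))
          ⟨div_nonneg (sub_nonneg.2 hsp) hd.le, (div_le_one hd).2 (by linarith)⟩ _ _ ?_ (by ring)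
        field_simp
        ring
      · rw [trapezoid_of_right_le hP.1 hpq hQ.2 hsq]
        refine hcombo zb hzb q hq 0 k (hnn _ hzb) hkq ((b - s) / (b - normalCoord h q))
          ⟨div_nonneg (sub_nonneg.2 hs.2) hQb.le, (div_le_one hQb).2 (by linarith)⟩ _ _ ?_ (by ring)
        rw [hnb]
        field_simp
        ring)
  rw [intervalIntegral.integral_const_mul, integral_trapezoid hP.1 hpq hQ.2] at key
  linarith

theorem L1N_uh_le_of_le {Ω : Set (ℝ × ℝ)} (hΩc : IsCompact Ω) {u : ℝ × ℝ → ℝ}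
    (hu : MemU Ω u) {h : ℝ × ℝ} (hh : h.1 ^ 2 + h.2 ^ 2 = 1) {a b : ℝ} (hab : a ≤ b)
    (himg : normalCoord h '' Ω = Icc a b) {m : ℝ} (hm : 0 ≤ m) (hum : ∀ z ∈ Ω, u z ≤ m) :
    L1N Ω (uh h u) ≤ 2 * (m * (b - a)) := by
  have := L1N_uh_le hΩc hu hh hab himg (g := fun _ => m) continuous_const.integrableOn_Icc
    (fun _ _ => hm) hum
  rw [intervalIntegral.integral_const, smul_eq_mul] at this
  linarith

/-- If `u` stays below `m (1 - δ)` on a strip of width `δ`, the bound on `‖u_h‖₁` improves. -/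
theorem L1N_uh_le_of_le_strip {Ω : Set (ℝ × ℝ)} (hΩc : IsCompact Ω) {u : ℝ × ℝ → ℝ}
    (hu : MemU Ω u) {h : ℝ × ℝ} (hh : h.1 ^ 2 + h.2 ^ 2 = 1) {a b : ℝ}
    (himg : normalCoord h '' Ω = Icc a b) {m : ℝ} (hm : 0 ≤ m) (hum : ∀ z ∈ Ω, u z ≤ m)
    {c δ : ℝ} (hδ0 : 0 ≤ δ) (hδ1 : δ ≤ 1) (hac : a ≤ c) (hcb : c + δ ≤ b)
    (hstrip : ∀ z ∈ Ω, normalCoord h z ∈ Icc c (c + δ) → u z ≤ m * (1 - δ)) :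
    L1N Ω (uh h u) ≤ 2 * (m * ((b - a) - δ ^ 2)) := by
  have hab : a ≤ b := by linarith
  have hmδ : 0 ≤ m * (1 - δ) := mul_nonneg hm (sub_nonneg.2 hδ1)
  have hI : IntegrableOn ((Icc c (c + δ)).indicator fun _ => m * δ) (Icc a b) :=
    (continuous_const.integrableOn_Icc).indicator measurableSet_Icc
  have := L1N_uh_le hΩc hu hh hab himg
    (g := fun s => m - (Icc c (c + δ)).indicator (fun _ => m * δ) s)
    (Integrable.sub continuous_const.integrableOn_Icc hI)
    (fun s _ => by
      by_cases hs : s ∈ Icc c (c + δ)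
      · rw [indicator_of_mem hs]
        linarith
      · rw [indicator_of_notMem hs]
        linarith)
    (fun z hz => by
      by_cases hs : normalCoord h z ∈ Icc c (c + δ)
      · rw [indicator_of_mem hs]
        linarith [hstrip z hz hs]
      · rw [indicator_of_notMem hs]
        linarith [hum z hz])
  have h_int : ∫ s in a..b, (m - (Icc c (c + δ)).indicator (fun _ => m * δ) s) =
      m * ((b - a) - δ ^ 2) := by
    rw [intervalIntegral.integral_of_le hab, ← integral_Icc_eq_integral_Ioc,
      integral_sub continuous_const.integrableOn_Icc hI, setIntegral_indicator measurableSet_Icc,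
      inter_eq_right.2 (Icc_subset_Icc hac hcb), setIntegral_const, setIntegral_const]
    simp only [measureReal_def, Real.volume_Icc, smul_eq_mul]
    rw [ENNReal.toReal_ofReal (by linarith), ENNReal.toReal_ofReal (by linarith)]
    ring
  rwa [h_int] at this

theorem MemU.exists_max {Ω : Set (ℝ × ℝ)} (hΩc : IsCompact Ω) {u : ℝ × ℝ → ℝ} (hu : MemU Ω u)
    (hne : ∃ z ∈ Ω, u z ≠ 0) : ∃ z₀ ∈ Ω, 0 < u z₀ ∧ ∀ z ∈ Ω, u z ≤ u z₀ := by
  obtain ⟨z, hz, hz0⟩ := hne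
  obtain ⟨z₀, hz₀, hmax⟩ := hΩc.exists_isMaxOn ⟨z, hz⟩ hu.1
  exact ⟨z₀, hz₀, ((nonneg_of_concaveOn_of_frontier hΩc hu.2.1 hu.2.2.1 hz).lt_of_ne'
    hz0).trans_le (hmax hz), hmax⟩

theorem L1N_uh_div_le {Ω : Set (ℝ × ℝ)} (hΩc : IsCompact Ω) {u : ℝ × ℝ → ℝ} (hu : MemU Ω u)
    (hne : ∃ z ∈ Ω, u z ≠ 0) {h₁ h₂ : ℝ × ℝ} (hh₁ : h₁.1 ^ 2 + h₁.2 ^ 2 = 1)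
    (hh₂ : h₂.1 ^ 2 + h₂.2 ^ 2 = 1) {a₁ b₁ a₂ b₂ : ℝ} (hab₁ : a₁ < b₁) (hab₂ : a₂ < b₂)
    (himg₁ : normalCoord h₁ '' Ω = Icc a₁ b₁) (himg₂ : normalCoord h₂ '' Ω = Icc a₂ b₂) :
    L1N Ω (uh h₁ u) / L1N Ω (uh h₂ u) ≤ 2 * ((b₁ - a₁) / (b₂ - a₂)) := by
  obtain ⟨z₀, hz₀, hpos, hmax⟩ := hu.exists_max hΩc hne
  have hw₁ := sub_pos.2 hab₁
  have hw₂ := sub_pos.2 hab₂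
  have hup := L1N_uh_le_of_le hΩc hu hh₁ hab₁.le himg₁ hpos.le hmax
  have hlow := mul_width_add_le_L1N_uh hΩc hu hh₂ himg₂ hz₀ hz₀ hpos le_rfl le_rfl
  rw [sub_self, abs_zero, add_zero] at hlow
  have hmw : 0 < u z₀ * (b₂ - a₂) := mul_pos hpos hw₂
  calc L1N Ω (uh h₁ u) / L1N Ω (uh h₂ u)
      ≤ (2 * (u z₀ * (b₁ - a₁))) / (u z₀ * (b₂ - a₂)) :=
        div_le_div₀ (by positivity) hup hmw hlow
    _ = 2 * ((b₁ - a₁) / (b₂ - a₂)) := by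
        field_simp

/-- If a line parallel to `h₂` joins the two edges parallel to `h₁`, concave functions peaking over
a slightly shrunk chord make the ratio of norms nearly `2 w₁ / w₂`. -/
theorem exists_memU_ratio_ge {Ω : Set (ℝ × ℝ)} (hΩc : IsCompact Ω) (hΩ : Convex ℝ Ω)
    {c : ℝ × ℝ} (hc : c ∈ interior Ω) {h₁ h₂ : ℝ × ℝ} (hh₁ : h₁.1 ^ 2 + h₁.2 ^ 2 = 1)
    (hh₂ : h₂.1 ^ 2 + h₂.2 ^ 2 = 1) {a₁ b₁ a₂ b₂ : ℝ}
    (himg₁ : normalCoord h₁ '' Ω = Icc a₁ b₁) (himg₂ : normalCoord h₂ '' Ω = Icc a₂ b₂)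
    {z₁ z₂ : ℝ × ℝ} (hz₁ : z₁ ∈ Ω) (hz₂ : z₂ ∈ Ω) (hb₁ : normalCoord h₁ z₁ = b₁)
    (ha₁ : normalCoord h₁ z₂ = a₁) (hline : normalCoord h₂ z₁ = normalCoord h₂ z₂)
    {ε : ℝ} (hε0 : 0 < ε) (hε1 : ε < 1) :
    ∃ u, MemU Ω u ∧ (∃ z ∈ Ω, u z ≠ 0) ∧
      (2 - ε) * ((b₁ - a₁) / (b₂ - a₂)) ≤ L1N Ω (uh h₁ u) / L1N Ω (uh h₂ u) := by
  obtain ⟨v, K, hK, hvconc, hv0, hvnn, hvc⟩ := exists_concave_cone hΩ hc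
  have hcΩ := interior_subset hc
  have hc₁ := normalCoord_mem_Ioo_of_mem_interior hh₁ himg₁ hc
  have hc₂ := normalCoord_mem_Ioo_of_mem_interior hh₂ himg₂ hc
  have hε1' : 0 < 1 - ε := sub_pos.2 hε1
  have hw₁ : 0 < b₁ - a₁ := by linarith [hc₁.1, hc₁.2]
  have hw₂ : 0 < b₂ - a₂ := by linarith [hc₂.1, hc₂.2]
  set p := (1 - ε) • z₂ + ε • c with hp
  set q := (1 - ε) • z₁ + ε • c with hq
  have hpΩ : p ∈ Ω := hΩ hz₂ hcΩ hε1'.le hε0.le (by ring)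
  have hqΩ : q ∈ Ω := hΩ hz₁ hcΩ hε1'.le hε0.le (by ring)
  set s₀ := normalCoord h₂ p with hs₀
  have hqs₀ : normalCoord h₂ q = s₀ := by
    rw [hs₀, hp, hq, normalCoord_combo, normalCoord_combo, hline]
  have hs₀mem : s₀ ∈ Ioo a₂ b₂ := by
    have hz : normalCoord h₂ z₂ ∈ Icc a₂ b₂ := himg₂ ▸ mem_image_of_mem _ hz₂
    rw [hs₀, hp, normalCoord_combo]
    constructor
    · nlinarith [hz.1, hc₂.1]
    · nlinarith [hz.2, hc₂.2]
  have hvge : ∀ z ∈ Ω, 1 ≤ ε⁻¹ * v ((1 - ε) • z + ε • c) + 0 := by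
    intro z hz
    have := hvconc.2 hz hcΩ hε1'.le hε0.le (by ring)
    rw [hvc, smul_eq_mul, smul_eq_mul, mul_one] at this
    have h1 : ε ≤ v ((1 - ε) • z + ε • c) := by
      linarith [mul_nonneg hε1'.le (hvnn z hz)]
    rw [add_zero]
    exact (inv_mul_cancel₀ hε0.ne').ge.trans
      (mul_le_mul_of_nonneg_left h1 (inv_nonneg.2 hε0.le))
  set u : ℝ × ℝ → ℝ := fun z => min (ε⁻¹ * v z + 0) (trapezoid a₂ b₂ s₀ s₀ (normalCoord h₂ z))
    with hudef
  have hutrap : ∀ z, u z ≤ trapezoid a₂ b₂ s₀ s₀ (normalCoord h₂ z) := fun z => min_le_right _ _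
  obtain ⟨K', hK'⟩ := exists_lipschitzWith_trapezoid_normalCoord h₂ a₂ b₂ s₀ s₀
  have hu : MemU Ω u := by
    refine ((hK.mul_add_const ε⁻¹ 0).min hK').memU (ConcaveOn.inf ?_
      (concaveOn_trapezoid_normalCoord hΩ h₂ a₂ b₂ s₀ s₀)) fun z hz => ?_
    · simpa only [add_zero, smul_eq_mul] using hvconc.smul (inv_nonneg.2 hε0.le)
    · rw [hv0 z hz, mul_zero, add_zero]
      exact min_eq_left (trapezoid_nonneg hs₀mem.1 hs₀mem.2
        (himg₂ ▸ mem_image_of_mem _ (hΩc.isClosed.frontier_subset hz)))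
  have hup : 1 ≤ u p :=
    le_min (hvge z₂ hz₂) (trapezoid_of_mem_Icc hs₀mem.1 hs₀mem.2 ⟨le_rfl, le_rfl⟩).ge
  have huq : 1 ≤ u q := by
    refine le_min (hvge z₁ hz₁) ?_
    rw [hqs₀]
    exact (trapezoid_of_mem_Icc hs₀mem.1 hs₀mem.2 ⟨le_rfl, le_rfl⟩).ge
  refine ⟨u, hu, ⟨p, hpΩ, by linarith⟩, ?_⟩
  have hL₁ := mul_width_add_le_L1N_uh hΩc hu hh₁ himg₁ hpΩ hqΩ one_pos hup huq
  have hL₂ := mul_width_add_le_L1N_uh hΩc hu hh₂ himg₂ hpΩ hpΩ one_pos hup hup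
  have hU₂ := L1N_uh_le hΩc hu hh₂ (by linarith) himg₂
    (continuous_trapezoid a₂ b₂ s₀ s₀).integrableOn_Icc
    (fun s hs => trapezoid_nonneg hs₀mem.1 hs₀mem.2 hs) (fun z _ => hutrap z)
  rw [integral_trapezoid hs₀mem.1 le_rfl hs₀mem.2] at hU₂
  rw [sub_self, abs_zero, add_zero, one_mul] at hL₂
  have hdiff : normalCoord h₁ q - normalCoord h₁ p = (1 - ε) * (b₁ - a₁) := by
    rw [hp, hq, normalCoord_combo, normalCoord_combo, hb₁, ha₁]
    ring
  rw [hdiff, abs_of_nonneg (mul_nonneg hε1'.le hw₁.le)] at hL₁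
  rw [← mul_div_assoc]
  refine div_le_div₀ ?_ ?_ (by linarith) ?_
  · linarith [mul_nonneg hε1'.le hw₁.le]
  · linarith
  · linarith

/-- Near-optimality of `u` forces points near the two edges parallel to `h₁` lying almost on a
common line parallel to `h₂`. -/
theorem exists_near_edges {Ω : Set (ℝ × ℝ)} (hΩc : IsCompact Ω) {u : ℝ × ℝ → ℝ} (hu : MemU Ω u)
    (hne : ∃ z ∈ Ω, u z ≠ 0) {h₁ h₂ : ℝ × ℝ} (hh₁ : h₁.1 ^ 2 + h₁.2 ^ 2 = 1)
    (hh₂ : h₂.1 ^ 2 + h₂.2 ^ 2 = 1) {a₁ b₁ a₂ b₂ : ℝ} (hab₁ : a₁ < b₁) (hab₂ : a₂ < b₂)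
    (himg₁ : normalCoord h₁ '' Ω = Icc a₁ b₁) (himg₂ : normalCoord h₂ '' Ω = Icc a₂ b₂)
    {δ η : ℝ} (hδ0 : 0 < δ) (hδ1 : δ ≤ 1 / 4) (hδw : δ ≤ b₁ - a₁) (hηδ : η ≤ δ)
    (hηw : η * (b₁ - a₁) ≤ δ ^ 2)
    (hratio : (1 - η) * (2 * ((b₁ - a₁) / (b₂ - a₂))) < L1N Ω (uh h₁ u) / L1N Ω (uh h₂ u)) :
    ∃ p ∈ Ω, ∃ q ∈ Ω, normalCoord h₁ p ≤ a₁ + δ ∧ b₁ - δ ≤ normalCoord h₁ q ∧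
      |normalCoord h₂ q - normalCoord h₂ p| ≤ 4 * δ * (b₂ - a₂) := by
  obtain ⟨z₀, hz₀, hpos, hmax⟩ := hu.exists_max hΩc hne
  set m := u z₀ with hm
  have hw₁ := sub_pos.2 hab₁
  have hw₂ := sub_pos.2 hab₂
  have hup := L1N_uh_le_of_le hΩc hu hh₁ hab₁.le himg₁ hpos.le hmax
  have hlow := mul_width_add_le_L1N_uh hΩc hu hh₂ himg₂ hz₀ hz₀ hpos le_rfl le_rfl
  rw [sub_self, abs_zero, add_zero] at hlow
  have hL₂ : 0 < L1N Ω (uh h₂ u) := (mul_pos hpos hw₂).trans_le hlow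
  have hη1 : 0 < 1 - η := by linarith
  have hprod : (1 - η) * (2 * (b₁ - a₁)) * L1N Ω (uh h₂ u) < L1N Ω (uh h₁ u) * (b₂ - a₂) := by
    rw [← mul_div_assoc, ← mul_div_assoc, div_lt_div_iff₀ hw₂ hL₂] at hratio
    exact hratio
  have hL₁ : 2 * (m * ((b₁ - a₁) - δ ^ 2)) < L1N Ω (uh h₁ u) := by
    have h1 : (1 - η) * (2 * (b₁ - a₁)) * (m * (b₂ - a₂)) < L1N Ω (uh h₁ u) * (b₂ - a₂) :=
      (mul_le_mul_of_nonneg_left hlow (by positivity)).trans_lt hprod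
    have h2 : (1 - η) * (2 * (b₁ - a₁)) * m < L1N Ω (uh h₁ u) := by
      refine lt_of_mul_lt_mul_right ?_ hw₂.le
      linarith
    linarith [mul_le_mul_of_nonneg_left hηw hpos.le]
  have hstrip : ∀ c, a₁ ≤ c → c + δ ≤ b₁ →
      ∃ z ∈ Ω, normalCoord h₁ z ∈ Icc c (c + δ) ∧ m * (1 - δ) < u z := by
    intro c hac hcb
    by_contra! hcon
    exact hL₁.not_ge (L1N_uh_le_of_le_strip hΩc hu hh₁ himg₁ hpos.le hmax hδ0.le
      (by linarith) hac hcb hcon)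
  obtain ⟨p, hpΩ, hpI, hup'⟩ := hstrip a₁ le_rfl (by linarith)
  obtain ⟨q, hqΩ, hqI, huq'⟩ := hstrip (b₁ - δ) (by linarith) (by linarith)
  refine ⟨p, hpΩ, q, hqΩ, hpI.2, hqI.1, ?_⟩
  have hk : 0 < m * (1 - δ) := mul_pos hpos (by linarith)
  have hlow' := mul_width_add_le_L1N_uh hΩc hu hh₂ himg₂ hpΩ hqΩ hk hup'.le huq'.le
  set d := |normalCoord h₂ q - normalCoord h₂ p| with hd
  have hd0 : 0 ≤ d := abs_nonneg _
  have h3 : (1 - η) * (2 * (b₁ - a₁)) * (m * (1 - δ) * ((b₂ - a₂) + d)) <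
      2 * (m * (b₁ - a₁)) * (b₂ - a₂) :=
    (mul_le_mul_of_nonneg_left hlow' (by positivity)).trans_lt
      (hprod.trans_le (mul_le_mul_of_nonneg_right hup hw₂.le))
  have h4 : (1 - η) * (1 - δ) * ((b₂ - a₂) + d) < b₂ - a₂ := by
    refine lt_of_mul_lt_mul_left (a := 2 * (m * (b₁ - a₁))) ?_ (by positivity)
    linarith
  have h5 : (1 - 2 * δ) * ((b₂ - a₂) + d) ≤ (1 - η) * (1 - δ) * ((b₂ - a₂) + d) := by
    refine mul_le_mul_of_nonneg_right ?_ (by positivity)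
    nlinarith
  nlinarith

theorem exists_smul_of_normalCoord_eq {h x y : ℝ × ℝ} (hh : h.1 ^ 2 + h.2 ^ 2 = 1)
    (hxy : normalCoord h x = normalCoord h y) : ∃ t : ℝ, x = y + t • h := by
  refine ⟨(h.1 * x.1 + h.2 * x.2) - (h.1 * y.1 + h.2 * y.2), ?_⟩
  simp only [normalCoord] at hxy
  ext
  · simp only [Prod.fst_add, Prod.smul_fst, smul_eq_mul]
    linear_combination -h.2 * hxy - (x.1 - y.1) * hh
  · simp only [Prod.snd_add, Prod.smul_snd, smul_eq_mul]
    linear_combination h.1 * hxy - (x.2 - y.2) * hh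

/-- Corollary 2: for non-collinear unit vectors `h₁, h₂`, the supremum of
`‖u_{h₁}‖₁ / ‖u_{h₂}‖₁` over nonzero `u ∈ 𝒰_Ω` equals `2 w₁ / w₂` iff some straight line
parallel to `h₂` intersects both edges of `Ω` parallel to `h₁` (points `z₁, z₂` of `Ω`
lying on the two support lines of `Ω` parallel to `h₁` and differing by a multiple
of `h₂`). -/
theorem stmt_8 (Ω : Set (ℝ × ℝ)) (hΩc : IsCompact Ω) (hΩconv : Convex ℝ Ω)
    (hΩint : (interior Ω).Nonempty)
    (h₁ h₂ : ℝ × ℝ) (hh₁ : h₁.1 ^ 2 + h₁.2 ^ 2 = 1) (hh₂ : h₂.1 ^ 2 + h₂.2 ^ 2 = 1)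
    (hnc : ¬ ∃ t : ℝ, h₁ = t • h₂) :
    sSup {r : ℝ | ∃ u : ℝ × ℝ → ℝ, MemU Ω u ∧ (∃ z ∈ Ω, u z ≠ 0) ∧
        r = L1N Ω (uh h₁ u) / L1N Ω (uh h₂ u)} = 2 * (widthPar Ω h₁ / widthPar Ω h₂) ↔
      ∃ z₁ ∈ Ω, ∃ z₂ ∈ Ω,
        -h₁.2 * z₁.1 + h₁.1 * z₁.2 =
          sSup ((fun z : ℝ × ℝ => -h₁.2 * z.1 + h₁.1 * z.2) '' Ω) ∧
        -h₁.2 * z₂.1 + h₁.1 * z₂.2 =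
          sInf ((fun z : ℝ × ℝ => -h₁.2 * z.1 + h₁.1 * z.2) '' Ω) ∧
        ∃ t : ℝ, z₁ = z₂ + t • h₂ := by
  obtain ⟨c, hc⟩ := hΩint
  have hne : Ω.Nonempty := ⟨c, interior_subset hc⟩
  have himg₁ := image_normalCoord hΩc hΩconv hne h₁
  have himg₂ := image_normalCoord hΩc hΩconv hne h₂
  change sSup _ = 2 * ((sSup (normalCoord h₁ '' Ω) - sInf (normalCoord h₁ '' Ω)) /
      (sSup (normalCoord h₂ '' Ω) - sInf (normalCoord h₂ '' Ω))) ↔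
    ∃ z₁ ∈ Ω, ∃ z₂ ∈ Ω, normalCoord h₁ z₁ = sSup (normalCoord h₁ '' Ω) ∧
      normalCoord h₁ z₂ = sInf (normalCoord h₁ '' Ω) ∧ ∃ t : ℝ, z₁ = z₂ + t • h₂
  generalize sSup (normalCoord h₁ '' Ω) = b₁, sInf (normalCoord h₁ '' Ω) = a₁ at *
  generalize sSup (normalCoord h₂ '' Ω) = b₂, sInf (normalCoord h₂ '' Ω) = a₂ at *
  have hc₁ := normalCoord_mem_Ioo_of_mem_interior hh₁ himg₁ hc
  have hc₂ := normalCoord_mem_Ioo_of_mem_interior hh₂ himg₂ hc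
  have hab₁ : a₁ < b₁ := hc₁.1.trans hc₁.2
  have hab₂ : a₂ < b₂ := hc₂.1.trans hc₂.2
  have hw₁ := sub_pos.2 hab₁
  have hw₂ := sub_pos.2 hab₂
  have hR : 0 < (b₁ - a₁) / (b₂ - a₂) := div_pos hw₁ hw₂
  set A : Set ℝ := {r : ℝ | ∃ u : ℝ × ℝ → ℝ, MemU Ω u ∧ (∃ z ∈ Ω, u z ≠ 0) ∧
    r = L1N Ω (uh h₁ u) / L1N Ω (uh h₂ u)} with hA
  have hub : ∀ r ∈ A, r ≤ 2 * ((b₁ - a₁) / (b₂ - a₂)) := by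
    rintro r ⟨u, hu, hune, rfl⟩
    exact L1N_uh_div_le hΩc hu hune hh₁ hh₂ hab₁ hab₂ himg₁ himg₂
  constructor
  · intro hsup
    have hAne : A.Nonempty := by
      by_contra hcon
      rw [not_nonempty_iff_eq_empty.1 hcon, Real.sSup_empty] at hsup
      linarith
    let Φ : (ℝ × ℝ) × (ℝ × ℝ) → ℝ × ℝ × ℝ := fun w =>
      (normalCoord h₁ w.1, normalCoord h₁ w.2, normalCoord h₂ w.2 - normalCoord h₂ w.1)
    have hΦ : Continuous Φ :=
      ((continuous_normalCoord h₁).comp continuous_fst).prodMk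
        (((continuous_normalCoord h₁).comp continuous_snd).prodMk
          (((continuous_normalCoord h₂).comp continuous_snd).sub
            ((continuous_normalCoord h₂).comp continuous_fst)))
    have hclosed : IsClosed (Φ '' (Ω ×ˢ Ω)) := ((hΩc.prod hΩc).image hΦ).isClosed
    have hmem : (a₁, b₁, (0 : ℝ)) ∈ Φ '' (Ω ×ˢ Ω) := by
      rw [← hclosed.closure_eq, Metric.mem_closure_iff]
      intro ε hε
      obtain ⟨δ, hδ0, hδ1, hδw, hδε, hδε'⟩ : ∃ δ : ℝ, 0 < δ ∧ δ ≤ 1 / 4 ∧ δ ≤ b₁ - a₁ ∧ δ < ε ∧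
          4 * δ * (b₂ - a₂) < ε := by
        refine ⟨min (1 / 4) (min (b₁ - a₁) (min (ε / 2) (ε / (8 * (b₂ - a₂))))), by positivity,
          min_le_left _ _, (min_le_right _ _).trans (min_le_left _ _), ?_, ?_⟩
        · refine lt_of_le_of_lt ((min_le_right _ _).trans ((min_le_right _ _).trans
            (min_le_left _ _))) (half_lt_self hε)
        · have h8 : 0 < 8 * (b₂ - a₂) := by positivity
          have : min (1 / 4) (min (b₁ - a₁) (min (ε / 2) (ε / (8 * (b₂ - a₂))))) ≤
              ε / (8 * (b₂ - a₂)) := (min_le_right _ _).trans ((min_le_right _ _).trans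
            (min_le_right _ _))
          rw [le_div_iff₀ h8] at this
          linarith
      obtain ⟨η, hη0, hηδ, hηw⟩ : ∃ η : ℝ, 0 < η ∧ η ≤ δ ∧ η * (b₁ - a₁) ≤ δ ^ 2 :=
        ⟨min δ (δ ^ 2 / (b₁ - a₁)), by positivity, min_le_left _ _,
          (le_div_iff₀ hw₁).1 (min_le_right _ _)⟩
      obtain ⟨r, ⟨u, hu, hune, rfl⟩, hr⟩ := exists_lt_of_lt_csSup hAne
        (show (1 - η) * (2 * ((b₁ - a₁) / (b₂ - a₂))) < sSup A by
          rw [hsup]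
          linarith [mul_pos hη0 hR])
      obtain ⟨p, hp, q, hq, hpa, hqb, hpq⟩ := exists_near_edges hΩc hu hune hh₁ hh₂ hab₁ hab₂
        himg₁ himg₂ hδ0 hδ1 hδw hηδ hηw hr
      have hpI : normalCoord h₁ p ∈ Icc a₁ b₁ := himg₁ ▸ mem_image_of_mem _ hp
      have hqI : normalCoord h₁ q ∈ Icc a₁ b₁ := himg₁ ▸ mem_image_of_mem _ hq
      refine ⟨Φ (p, q), mem_image_of_mem Φ ⟨hp, hq⟩, ?_⟩
      rw [Prod.dist_eq, Prod.dist_eq, Real.dist_eq, Real.dist_eq, Real.dist_eq]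
      refine max_lt ?_ (max_lt ?_ ?_)
      · rw [abs_lt]
        constructor <;> linarith [hpI.1]
      · rw [abs_lt]
        constructor <;> linarith [hqI.2]
      · rw [zero_sub, abs_neg]
        exact hpq.trans_lt hδε'
    obtain ⟨⟨p, q⟩, ⟨hp, hq⟩, hpq⟩ := hmem
    simp only [Φ, Prod.mk.injEq] at hpq
    exact ⟨q, hq, p, hp, hpq.2.1, hpq.1,
      exists_smul_of_normalCoord_eq hh₂ (sub_eq_zero.1 hpq.2.2)⟩
  · rintro ⟨z₁, hz₁, z₂, hz₂, hb₁, ha₁, t, ht⟩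
    have hline : normalCoord h₂ z₁ = normalCoord h₂ z₂ := by
      rw [ht]
      simp only [normalCoord, Prod.fst_add, Prod.snd_add, Prod.smul_fst, Prod.smul_snd, smul_eq_mul]
      ring
    have hex : ∀ ε : ℝ, 0 < ε → ε < 1 → ∃ r ∈ A, (2 - ε) * ((b₁ - a₁) / (b₂ - a₂)) ≤ r := by
      intro ε hε0 hε1
      obtain ⟨u, hu, hune, hr⟩ := exists_memU_ratio_ge hΩc hΩconv hc hh₁ hh₂ himg₁ himg₂ hz₁ hz₂
        hb₁ ha₁ hline hε0 hε1
      exact ⟨_, ⟨u, hu, hune, rfl⟩, hr⟩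
    obtain ⟨r₀, hr₀, _⟩ := hex (1 / 2) (by norm_num) (by norm_num)
    refine csSup_eq_of_forall_le_of_forall_lt_exists_gt ⟨r₀, hr₀⟩ hub fun y hy => ?_
    set R := (b₁ - a₁) / (b₂ - a₂) with hRdef
    have hgap : 0 < (2 * R - y) / (2 * R) := div_pos (by linarith) (by linarith)
    obtain ⟨r, hr, hle⟩ := hex (min (1 / 2) ((2 * R - y) / (2 * R)))
      (lt_min (by norm_num) hgap) ((min_le_left _ _).trans_lt (by norm_num))
    refine ⟨r, hr, lt_of_lt_of_le ?_ hle⟩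
    have hmin := min_le_right (1 / 2 : ℝ) ((2 * R - y) / (2 * R))
    rw [le_div_iff₀ (by linarith)] at hmin
    linarith
end
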